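/- arXiv:2208.02212 — 2 statements merged into one kernel-verified Lean document; each statement's English description precedes it below -/
import Mathlib

section
/- Let 0 ≤ s < n and let A be an (s+1)×(n−s) real matrix. Assume that either (a) there exist a vector v ∈ ℝ^{s+1} and rational numbers r₁, …, r_{n−s} such that for each l the l-th column of A equals r_l·v, or (b) there exist a vector u ∈ ℝ^{n−s} and rational numbers r₀, …, r_s such that for each i the i-th row of A equals r_i·u. Then A is not n-singular if and only if for Lebesgue-almost every x ∈ ℝ^s the vector (x, x̃A) ∈ ℝ^n is not singular. -/
open MeasureTheory Filter

/-- A vector `x ∈ ℝ^n` is singular. -/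
def IsSingularVec {n : ℕ} (x : Fin n → ℝ) : Prop :=
  ∀ c : ℝ, 0 < c → ∃ Q₀ : ℝ, 0 < Q₀ ∧ ∀ Q : ℝ, Q₀ ≤ Q →
    ∃ q : Fin n → ℤ, q ≠ 0 ∧ ∃ q₀ : ℤ,
      |(∑ i, (q i : ℝ) * x i) + (q₀ : ℝ)| < c / Q ^ n ∧ ∀ i, |(q i : ℝ)| ≤ Q

/-- A real `k×l` matrix `A` is `ω`-singular (here `Q ^ ω` is `Real.rpow`). -/
def IsMatSingular {k l : ℕ} (A : Matrix (Fin k) (Fin l) ℝ) (ω : ℝ) : Prop :=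
  ∀ c : ℝ, 0 < c → ∃ Q₀ : ℝ, 0 < Q₀ ∧ ∀ Q : ℝ, Q₀ ≤ Q →
    ∃ q : Fin l → ℤ, q ≠ 0 ∧ ∃ p : Fin k → ℤ,
      (∀ i, |(∑ j, A i j * (q j : ℝ)) + (p i : ℝ)| < c / Q ^ ω) ∧ ∀ j, |(q j : ℝ)| ≤ Q

/-- The point `(x, x̃A)` of the affine subspace `𝓛_A ⊆ ℝ^n`, where `n = s + m`,
`A` is an `(s+1) × m` matrix and `x̃ = (1, x)`. -/
noncomputable def affVec {s m : ℕ} (A : Matrix (Fin (s+1)) (Fin m) ℝ) (x : Fin s → ℝ) :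
    Fin (s + m) → ℝ :=
  Fin.append x (fun l => ∑ i, (Fin.cons 1 x : Fin (s+1) → ℝ) i * A i l)

/-!
An integer relation `q̂ · (x, x̃A) + q₀` with `q̂ = (p', q)` is the affine form `x̃ · w` with
coefficient vector `w = A q + p`, where `p = (q₀, p')`. If `A` is `n`-singular, some `w` is very
small, and hence so is `x̃ · w` at every `x`.

Conversely let `A` be not `n`-singular, so that `‖w‖ ≥ c / Q ^ n` for all `w` with `q ≠ 0` and
`‖q‖ ≤ Q`, for arbitrarily large `Q`. For these `Q` the slabs `|x̃ · w| < ε / Q ^ n` cover at most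
`O(ε)` of a ball, since a slab of width `η` has measure `O(η / ‖w‖)` there:

* for `w` with linear part bounded below there are `O(Q ^ n)` pairs `(q, p')`, and the slabs of the
  various `q₀` together have measure `O(η)`;
* otherwise `w` is small and `p` is determined by `q`, leaving `O(Q ^ m)` vectors, which suffices
  when `‖w‖ ≥ δ / Q ^ s`;
* by the rationality assumption the remaining `w` lie on a line through `0`, and all slabs attached
  to multiples of `e` with norm at least `ρ` lie in the single slab `|x̃ · e| < ‖e‖ η / ρ`.

Letting `ε → 0`, the singular points form a null set.
-/

open scoped Matrix

section Norms

variable {ι : Type*} [Fintype ι]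

lemma abs_dotProduct_le_card_mul_norm (a b : ι → ℝ) :
    |a ⬝ᵥ b| ≤ Fintype.card ι * (‖a‖ * ‖b‖) := by
  calc |∑ i, a i * b i| ≤ ∑ i, ‖a i * b i‖ := Finset.abs_sum_le_sum_abs _ _
    _ ≤ ∑ _i : ι, ‖a‖ * ‖b‖ := by
      gcongr with i
      rw [norm_mul]
      gcongr <;> exact norm_le_pi_norm _ i
    _ = Fintype.card ι * (‖a‖ * ‖b‖) := by simp

lemma norm_intCast_comp (q : ι → ℤ) : ‖fun i => (q i : ℝ)‖ = ‖q‖ := by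
  have nnnorm_intCast (z : ℤ) : ‖(z : ℝ)‖₊ = ‖z‖₊ := NNReal.eq (Int.norm_cast_real z)
  simp only [Pi.norm_def, nnnorm_intCast]

lemma abs_intCast_dotProduct_le (z q : ι → ℤ) :
    |((z ⬝ᵥ q : ℤ) : ℝ)| ≤ Fintype.card ι * (‖z‖ * ‖q‖) := by
  simpa only [dotProduct, Int.cast_sum, Int.cast_mul, norm_intCast_comp] using
    abs_dotProduct_le_card_mul_norm (fun i => (z i : ℝ)) (fun i => (q i : ℝ))

lemma int_eq_zero_of_abs_cast_lt_one {z : ℤ} (h : |(z : ℝ)| < 1) : z = 0 := by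
  rw [← Int.abs_lt_one_iff]
  exact_mod_cast h

lemma card_Icc_ceil_floor_le {a b : ℝ} (hab : a ≤ b) :
    ((Finset.Icc ⌈a⌉ ⌊b⌋).card : ℝ) ≤ b - a + 1 := by
  have hcard : ((Finset.Icc ⌈a⌉ ⌊b⌋).card : ℝ) = max ((⌊b⌋ : ℝ) + 1 - ⌈a⌉) 0 := by
    rw [Int.card_Icc]
    exact_mod_cast Int.toNat_eq_max _
  rw [hcard]
  exact max_le (by linarith [Int.floor_le b, Int.le_ceil a]) (by linarith)

/-- The integer vectors of sup norm at most `Q`. -/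
noncomputable def intBall (ι : Type*) [Fintype ι] [DecidableEq ι] (Q : ℝ) : Finset (ι → ℤ) :=
  Fintype.piFinset fun _ => Finset.Icc ⌈-Q⌉ ⌊Q⌋

variable [DecidableEq ι] {Q : ℝ}

lemma mem_intBall (hQ : 0 ≤ Q) {q : ι → ℤ} : q ∈ intBall ι Q ↔ ‖q‖ ≤ Q := by
  simp only [intBall, Fintype.mem_piFinset, Finset.mem_Icc, Int.ceil_le, Int.le_floor,
    pi_norm_le_iff_of_nonneg hQ, Int.norm_eq_abs, abs_le]

lemma card_intBall_le (hQ : 1 ≤ Q) : ((intBall ι Q).card : ℝ) ≤ (3 * Q) ^ Fintype.card ι := by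
  rw [intBall, Fintype.card_piFinset, Finset.prod_const, Finset.card_univ, Nat.cast_pow]
  gcongr
  linarith [card_Icc_ceil_floor_le (show -Q ≤ Q by linarith)]

end Norms

section Measure

variable {α : Type*} [MeasurableSpace α] {μ : Measure α}

lemma measureReal_le_of_ae_imp [IsFiniteMeasure μ] {s t : Set α} (h : ∀ᵐ x ∂μ, x ∈ s → x ∈ t) :
    μ.real s ≤ μ.real t :=
  ENNReal.toReal_mono (measure_ne_top μ t) (measure_mono_ae h)

lemma measure_setOf_eventually_mem_le {ι : Type*} {l : Filter ι} [l.IsCountablyGenerated]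
    {E : ι → Set α} {b : ENNReal} (h : ∃ᶠ i in l, μ (E i) ≤ b) :
    μ {x | ∀ᶠ i in l, x ∈ E i} ≤ b := by
  obtain ⟨B, hB⟩ := l.exists_antitone_basis
  have hset : {x | ∀ᶠ i in l, x ∈ E i} = ⋃ n, ⋂ i ∈ B n, E i := by
    ext x
    simp [hB.eventually_iff]
  have hmono : Monotone fun n => ⋂ i ∈ B n, E i := fun _ _ hnk =>
    Set.biInter_subset_biInter_left (hB.antitone hnk)
  rw [hset, hmono.measure_iUnion]
  refine iSup_le fun n => ?_
  obtain ⟨i, hi, hiB⟩ := (h.and_eventually (hB.mem n)).exists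
  exact (measure_mono (Set.biInter_subset_of_mem hiB)).trans hi

end Measure

section CoordinateSlab

variable {ι : Type*} [Fintype ι]

/-- The linear map replacing the `i`-th coordinate of `x` by `x ⬝ᵥ a`; it carries the slabs
orthogonal to `a` to slabs orthogonal to the `i`-th coordinate axis. -/
noncomputable def replaceCoord [DecidableEq ι] (i : ι) (a : ι → ℝ) : (ι → ℝ) →ₗ[ℝ] (ι → ℝ) :=
  Matrix.toLin' ((1 : Matrix ι ι ℝ).updateRow i a)

lemma replaceCoord_apply [DecidableEq ι] (i : ι) (a x : ι → ℝ) :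
    replaceCoord i a x = Function.update x i (x ⬝ᵥ a) := by
  ext j
  rcases eq_or_ne j i with rfl | hj
  · simp [replaceCoord, Matrix.mulVec, dotProduct_comm]
  · simp [replaceCoord, Matrix.mulVec, hj, dotProduct, Matrix.one_apply]

lemma det_replaceCoord [DecidableEq ι] (i : ι) (a : ι → ℝ) :
    LinearMap.det (replaceCoord i a) = a i := by
  rw [replaceCoord, LinearMap.det_toLin', ← Matrix.cramer_transpose_apply, Matrix.transpose_one,
    Matrix.cramer_one, Module.End.one_apply]

lemma volume_real_Icc_update {M η : ℝ} (hM : 0 ≤ M) (hη : 0 ≤ η) [DecidableEq ι] (i : ι) (b : ℝ) :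
    volume.real (Set.Icc (Function.update (fun _ : ι => -M) i (b - η))
      (Function.update (fun _ => M) i (b + η))) = 2 * η * (2 * M) ^ (Fintype.card ι - 1) := by
  have hside (j : ι) : Function.update (fun _ => M) i (b + η) j
      - Function.update (fun _ => -M) i (b - η) j
        = Function.update (fun _ => 2 * M) i (2 * η) j := by
    rcases eq_or_ne j i with rfl | hj
    · simp only [Function.update_self]
      ring
    · simp only [Function.update_of_ne hj]
      ring
  rw [measureReal_def, Real.volume_Icc_pi_toReal
    (update_le_update_iff.2 ⟨by linarith, fun _ _ => by linarith⟩), Finset.prod_congr rfl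
    fun j _ => hside j, Finset.prod_update_of_mem (Finset.mem_univ i), Finset.prod_const,
    Finset.card_sdiff_of_subset (Finset.subset_univ _), Finset.card_univ, Finset.card_singleton]

lemma abs_mul_volume_real_slab_le {M η : ℝ} (hM : 0 ≤ M) (hη : 0 ≤ η) (a : ι → ℝ) (b : ℝ)
    (i : ι) :
    |a i| * volume.real ({x | |b + x ⬝ᵥ a| < η} ∩ Metric.closedBall 0 M)
      ≤ 2 * η * (2 * M) ^ (Fintype.card ι - 1) := by
  classical
  by_cases hai : a i = 0
  · rw [hai, abs_zero, zero_mul]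
    positivity
  set box := Set.Icc (Function.update (fun _ : ι => -M) i (-b - η))
    (Function.update (fun _ => M) i (-b + η)) with hbox
  have hsub : {x | |b + x ⬝ᵥ a| < η} ∩ Metric.closedBall 0 M ⊆ replaceCoord i a ⁻¹' box := by
    rintro x ⟨hslab, hball⟩
    rw [Set.mem_ofPred_eq, abs_lt] at hslab
    have hx (j : ι) : |x j| ≤ M := (norm_le_pi_norm x j).trans (mem_closedBall_zero_iff.1 hball)
    rw [Set.mem_preimage, replaceCoord_apply, hbox, Set.mem_Icc, update_le_update_iff,
      update_le_update_iff]
    exact ⟨⟨by linarith, fun j _ => (abs_le.1 (hx j)).1⟩,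
      by linarith, fun j _ => (abs_le.1 (hx j)).2⟩
  have hpreimage : volume (replaceCoord i a ⁻¹' box)
      = ENNReal.ofReal |(a i)⁻¹| * volume box := by
    rw [Measure.addHaar_preimage_linearMap _ (by rwa [det_replaceCoord]), det_replaceCoord]
  calc |a i| * volume.real ({x | |b + x ⬝ᵥ a| < η} ∩ Metric.closedBall 0 M)
      ≤ |a i| * volume.real (replaceCoord i a ⁻¹' box) := by
        gcongr
        rw [hpreimage]
        exact ENNReal.mul_ne_top ENNReal.ofReal_ne_top measure_Icc_lt_top.ne
    _ = volume.real box := by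
        rw [measureReal_def, hpreimage, ENNReal.toReal_mul, ENNReal.toReal_ofReal (abs_nonneg _),
          ← mul_assoc, ← abs_mul, mul_inv_cancel₀ hai, abs_one, one_mul, measureReal_def]
    _ = 2 * η * (2 * M) ^ (Fintype.card ι - 1) := volume_real_Icc_update hM hη i (-b)

end CoordinateSlab

section AffineForm

variable {s : ℕ}

/-- The affine form `x ↦ x̃ · w` on `ℝ^s` with coefficient vector `w`, where `x̃ = (1, x)`. -/
def affForm (w : Fin (s + 1) → ℝ) (x : Fin s → ℝ) : ℝ :=
  (Fin.cons 1 x : Fin (s + 1) → ℝ) ⬝ᵥ w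

lemma affForm_eq (w : Fin (s + 1) → ℝ) (x : Fin s → ℝ) :
    affForm w x = w 0 + x ⬝ᵥ Fin.tail w := by
  simp [affForm, dotProduct, Fin.sum_univ_succ, Fin.tail]

lemma affForm_smul (t : ℝ) (w : Fin (s + 1) → ℝ) (x : Fin s → ℝ) :
    affForm (t • w) x = t * affForm w x := dotProduct_smul t _ _

lemma affForm_add_single_zero (w : Fin (s + 1) → ℝ) (c : ℝ) (x : Fin s → ℝ) :
    affForm (w + Pi.single 0 c) x = affForm w x + c := by
  rw [affForm, dotProduct_add, dotProduct_single, Fin.cons_zero, one_mul, affForm]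

lemma norm_tail_le (w : Fin (s + 1) → ℝ) : ‖Fin.tail w‖ ≤ ‖w‖ :=
  (pi_norm_le_iff_of_nonneg (norm_nonneg w)).2 fun i => norm_le_pi_norm w i.succ

lemma tail_add_single_zero (w : Fin (s + 1) → ℝ) (c : ℝ) :
    Fin.tail (w + Pi.single 0 c) = Fin.tail w := by
  ext i
  simp [Fin.tail]

lemma norm_le_max_abs_norm_tail (w : Fin (s + 1) → ℝ) : ‖w‖ ≤ max |w 0| ‖Fin.tail w‖ := by
  refine (pi_norm_le_iff_of_nonneg (by positivity)).2 (Fin.forall_fin_succ.2 ⟨?_, fun i => ?_⟩)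
  · exact le_max_left _ _
  · exact (norm_le_pi_norm (Fin.tail w) i).trans (le_max_right _ _)

lemma abs_affForm_sub_le {x : Fin s → ℝ} {M : ℝ} (hx : ‖x‖ ≤ M) (w : Fin (s + 1) → ℝ) :
    |affForm w x - w 0| ≤ s * M * ‖Fin.tail w‖ := by
  calc |affForm w x - w 0| ≤ s * (‖x‖ * ‖Fin.tail w‖) := by
        simpa [affForm_eq] using abs_dotProduct_le_card_mul_norm x (Fin.tail w)
    _ ≤ s * M * ‖Fin.tail w‖ := by
        rw [mul_assoc]
        gcongr

lemma mem_Icc_of_abs_affForm_add_intCast_lt {x : Fin s → ℝ} {M η : ℝ} (hx : ‖x‖ ≤ M)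
    (hη : η ≤ 1) {w : Fin (s + 1) → ℝ} {k : ℤ} (hk : |affForm w x + k| < η) :
    k ∈ Finset.Icc ⌈-w 0 - (s * M * ‖Fin.tail w‖ + 1)⌉ ⌊-w 0 + (s * M * ‖Fin.tail w‖ + 1)⌋ := by
  have hdist := abs_le.1 (abs_affForm_sub_le hx w)
  have hkη := abs_lt.1 hk
  exact Finset.mem_Icc.2 ⟨Int.ceil_le.2 (by linarith), Int.le_floor.2 (by linarith)⟩

/-- The points at which one of the affine forms with coefficient vector in `W` has absolute value
less than `η`. -/
def slabUnion (W : Set (Fin (s + 1) → ℝ)) (η : ℝ) : Set (Fin s → ℝ) :=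
  {x | ∃ w ∈ W, |affForm w x| < η}

lemma slabUnion_mono {W W' : Set (Fin (s + 1) → ℝ)} (h : W ⊆ W') (η : ℝ) :
    slabUnion W η ⊆ slabUnion W' η := fun _ ⟨w, hw, hx⟩ => ⟨w, h hw, hx⟩

/-- The measure `μ` gives each slab `|x̃ · w| < η` a mass at most `C η / ‖w‖`. -/
def HasSlabBound (μ : Measure (Fin s → ℝ)) (C : ℝ) : Prop :=
  ∀ (w : Fin (s + 1) → ℝ) (η : ℝ), 0 ≤ η → ‖w‖ * μ.real {x | |affForm w x| < η} ≤ C * η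

lemma norm_tail_mul_volume_real_slab_le {M η : ℝ} (hM : 0 ≤ M) (hη : 0 ≤ η)
    (w : Fin (s + 1) → ℝ) :
    ‖Fin.tail w‖ * volume.real ({x | |affForm w x| < η} ∩ Metric.closedBall 0 M)
      ≤ 2 * η * (2 * M) ^ (s - 1) := by
  set c := volume.real ({x | |affForm w x| < η} ∩ Metric.closedBall 0 M) with hc
  have hc0 : 0 ≤ c := measureReal_nonneg
  calc ‖Fin.tail w‖ * c = ‖c • Fin.tail w‖ := by
        rw [norm_smul, Real.norm_of_nonneg hc0, mul_comm]
    _ ≤ 2 * η * (2 * M) ^ (s - 1) := by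
      refine (pi_norm_le_iff_of_nonneg (by positivity)).2 fun i => ?_
      rw [Pi.smul_apply, norm_smul, Real.norm_of_nonneg hc0, mul_comm, hc]
      simpa only [affForm_eq, Fintype.card_fin, Real.norm_eq_abs] using
        abs_mul_volume_real_slab_le hM hη (Fin.tail w) (w 0) i

lemma exists_hasSlabBound_restrict_closedBall {M : ℝ} (hM : 0 ≤ M) :
    ∃ C, HasSlabBound (volume.restrict (Metric.closedBall (0 : Fin s → ℝ) M)) C := by
  refine ⟨volume.real (Metric.closedBall (0 : Fin s → ℝ) M)
    + (s * M + 1) * (2 * (2 * M) ^ (s - 1)), fun w η hη => ?_⟩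
  rw [measureReal_restrict_apply' measurableSet_closedBall]
  rcases ({x | |affForm w x| < η} ∩ Metric.closedBall 0 M).eq_empty_or_nonempty
    with hempty | ⟨x, hslab, hball⟩
  · rw [hempty, measureReal_empty, mul_zero]
    positivity
  have hw : ‖w‖ ≤ η + (s * M + 1) * ‖Fin.tail w‖ := by
    rw [Set.mem_ofPred_eq] at hslab
    have hw0 : |w 0| ≤ |affForm w x| + |affForm w x - w 0| := by
      simpa using abs_sub (affForm w x) (affForm w x - w 0)
    have htail := norm_nonneg (Fin.tail w)
    have hdiff := abs_affForm_sub_le (mem_closedBall_zero_iff.1 hball) w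
    refine (norm_le_max_abs_norm_tail w).trans (max_le (by linarith) ?_)
    have : 0 ≤ s * M * ‖Fin.tail w‖ := by positivity
    linarith
  have hmass : volume.real ({x | |affForm w x| < η} ∩ Metric.closedBall 0 M)
      ≤ volume.real (Metric.closedBall (0 : Fin s → ℝ) M) :=
    measureReal_mono Set.inter_subset_right measure_closedBall_lt_top.ne
  have htail := norm_tail_mul_volume_real_slab_le hM hη w
  set mass := volume.real ({x | |affForm w x| < η} ∩ Metric.closedBall 0 M)
  calc ‖w‖ * mass ≤ (η + (s * M + 1) * ‖Fin.tail w‖) * mass := by gcongr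
    _ = η * mass + (s * M + 1) * (‖Fin.tail w‖ * mass) := by ring
    _ ≤ η * volume.real (Metric.closedBall (0 : Fin s → ℝ) M)
        + (s * M + 1) * (2 * η * (2 * M) ^ (s - 1)) := by gcongr
    _ = _ := by ring

end AffineForm

section SlabBound

variable {s : ℕ} {μ : Measure (Fin s → ℝ)} {C : ℝ}

lemma HasSlabBound.nonneg (hμ : HasSlabBound μ C) : 0 ≤ C := by
  have h := hμ 0 1 zero_le_one
  rwa [norm_zero, zero_mul, mul_one] at h

lemma HasSlabBound.measureReal_slab_le (hμ : HasSlabBound μ C) {w : Fin (s + 1) → ℝ} {η τ : ℝ}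
    (hη : 0 ≤ η) (hτ : 0 < τ) (hw : τ ≤ ‖w‖) : μ.real {x | |affForm w x| < η} ≤ C * η / τ := by
  rw [le_div_iff₀' hτ]
  exact (mul_le_mul_of_nonneg_right hw measureReal_nonneg).trans (hμ w η hη)

lemma HasSlabBound.measureReal_slabUnion_finset_le (hμ : HasSlabBound μ C)
    (W : Finset (Fin (s + 1) → ℝ)) {η τ : ℝ} (hη : 0 ≤ η) (hτ : 0 < τ) (hW : ∀ w ∈ W, τ ≤ ‖w‖) :
    μ.real (slabUnion W η) ≤ W.card * (C * η / τ) := by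
  have hunion : slabUnion W η = ⋃ w ∈ W, {x | |affForm w x| < η} := by
    ext x
    simp [slabUnion]
  rw [hunion]
  refine (measureReal_biUnion_finset_le W _).trans ?_
  rw [← nsmul_eq_mul]
  exact Finset.sum_le_card_nsmul W _ _ fun w hw => hμ.measureReal_slab_le hη hτ (hW w hw)

lemma HasSlabBound.measureReal_slabUnion_line_le [IsFiniteMeasure μ] (hμ : HasSlabBound μ C)
    {W : Set (Fin (s + 1) → ℝ)} {e : Fin (s + 1) → ℝ} {η ρ : ℝ} (hη : 0 ≤ η) (hρ : 0 < ρ)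
    (hline : ∀ w ∈ W, w ∈ Submodule.span ℝ {e}) (hW : ∀ w ∈ W, ρ ≤ ‖w‖) :
    μ.real (slabUnion W η) ≤ C * (η / ρ) := by
  have hC := hμ.nonneg
  have hsub : slabUnion W η ⊆ {x | |affForm e x| < ‖e‖ * (η / ρ)} := by
    rintro x ⟨w, hwW, hwx⟩
    obtain ⟨t, rfl⟩ := Submodule.mem_span_singleton.1 (hline w hwW)
    have hnorm := hW _ hwW
    rw [norm_smul, Real.norm_eq_abs] at hnorm
    rw [affForm_smul, abs_mul] at hwx
    have ht : 0 < |t| := pos_of_mul_pos_left (hρ.trans_le hnorm) (norm_nonneg e)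
    refine lt_of_mul_lt_mul_left ?_ ht.le
    calc |t| * |affForm e x| < ρ * (η / ρ) := by rwa [mul_div_cancel₀ η hρ.ne']
      _ ≤ |t| * (‖e‖ * (η / ρ)) := by
        rw [← mul_assoc]
        gcongr
  rcases (norm_nonneg e).eq_or_lt with he | he
  · have hempty : slabUnion W η = ∅ := Set.subset_empty_iff.1 fun x hx => by
      have := hsub hx
      rw [← he, Set.mem_ofPred_eq, zero_mul] at this
      exact absurd this (abs_nonneg _).not_gt
    rw [hempty, measureReal_empty]
    positivity
  · calc μ.real (slabUnion W η) ≤ C * (‖e‖ * (η / ρ)) / ‖e‖ :=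
          (measureReal_mono hsub).trans (hμ.measureReal_slab_le (by positivity) he le_rfl)
      _ = C * (η / ρ) := by field_simp

end SlabBound

section FormValues

/-- The value `A q + p` of the linear forms given by the rows of `A` at an integer point. -/
def formValue {ι κ : Type*} [Fintype κ] (A : Matrix ι κ ℝ) (q : κ → ℤ) (p : ι → ℤ) : ι → ℝ :=
  A *ᵥ (fun j => (q j : ℝ)) + fun i => (p i : ℝ)

variable {ι κ : Type*} [Fintype κ]

lemma formValue_apply (A : Matrix ι κ ℝ) (q : κ → ℤ) (p : ι → ℤ) (i : ι) :
    formValue A q p i = ∑ j, A i j * (q j : ℝ) + (p i : ℝ) := rfl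

/-- The integer vector `p` that makes `A q + p` smallest. -/
noncomputable def nearestInt (A : Matrix ι κ ℝ) (q : κ → ℤ) (i : ι) : ℤ :=
  -round ((A *ᵥ fun j => (q j : ℝ)) i)

variable [Fintype ι]

lemma eq_nearestInt_of_norm_formValue_lt {A : Matrix ι κ ℝ} {q : κ → ℤ} {p : ι → ℤ}
    (h : ‖formValue A q p‖ < 1 / 2) : p = nearestInt A q := by
  ext i
  have hi : |formValue A q p i| < 1 / 2 := (norm_le_pi_norm _ i).trans_lt h
  have hround : round ((A *ᵥ fun j => (q j : ℝ)) i) = -p i := by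
    rw [round_eq, Int.floor_eq_iff]
    rw [formValue, Pi.add_apply, abs_lt] at hi
    push_cast
    constructor <;> linarith
  rw [nearestInt, hround, neg_neg]

lemma eq_zero_of_norm_formValue_lt_one {A : Matrix ι κ ℝ} {q : κ → ℤ} {p : ι → ℤ}
    (hq : A *ᵥ (fun j => (q j : ℝ)) = 0) (h : ‖formValue A q p‖ < 1) : p = 0 := by
  rw [formValue, hq, zero_add] at h
  exact funext fun i => int_eq_zero_of_abs_cast_lt_one
    ((norm_le_pi_norm (fun i => (p i : ℝ)) i).trans_lt h)

lemma formValue_eq_zero_of_norm_lt_one {A : Matrix ι κ ℝ} {q : κ → ℤ} {p : ι → ℤ}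
    (hq : A *ᵥ (fun j => (q j : ℝ)) = 0) (h : ‖formValue A q p‖ < 1) : formValue A q p = 0 := by
  ext i
  rw [formValue, hq, eq_zero_of_norm_formValue_lt_one hq h]
  simp

/-- The values `A q + p` at integer points with `q ≠ 0` and `‖q‖ ≤ Q`. -/
def formValues (A : Matrix ι κ ℝ) (Q : ℝ) : Set (ι → ℝ) :=
  {w | ∃ q ≠ 0, ‖q‖ ≤ Q ∧ ∃ p, formValue A q p = w}

/-- The elements of `formValues A Q` of norm less than `τ` all lie on one line through `0`. -/
def SmallValuesOnLine (A : Matrix ι κ ℝ) (Q τ : ℝ) : Prop :=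
  ∃ e : ι → ℝ, ∀ w ∈ formValues A Q, ‖w‖ < τ → w ∈ Submodule.span ℝ {e}

lemma SmallValuesOnLine.mono {A : Matrix ι κ ℝ} {Q τ τ' : ℝ} (h : SmallValuesOnLine A Q τ)
    (hτ : τ' ≤ τ) : SmallValuesOnLine A Q τ' := by
  obtain ⟨e, he⟩ := h
  exact ⟨e, fun w hw hwτ => he w hw (hwτ.trans_le hτ)⟩

end FormValues

section Singularity

lemma exists_pos_forall_ge_iff_eventually_atTop {P : ℝ → Prop} :
    (∃ Q₀ : ℝ, 0 < Q₀ ∧ ∀ Q : ℝ, Q₀ ≤ Q → P Q) ↔ ∀ᶠ Q in atTop, P Q := by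
  refine ⟨fun ⟨Q₀, _, h⟩ => eventually_atTop.2 ⟨Q₀, h⟩, fun h => ?_⟩
  obtain ⟨Q₀, hQ₀⟩ := eventually_atTop.1 h
  exact ⟨max Q₀ 1, by positivity, fun Q hQ => hQ₀ Q ((le_max_left _ _).trans hQ)⟩

lemma isMatSingular_iff {k l : ℕ} {A : Matrix (Fin k) (Fin l) ℝ} {ω : ℝ} :
    IsMatSingular A ω ↔
      ∀ c > 0, ∀ᶠ Q : ℝ in atTop, ∃ w ∈ formValues A Q, ‖w‖ < c / Q ^ ω := by
  simp only [IsMatSingular, exists_pos_forall_ge_iff_eventually_atTop]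
  refine forall₂_congr fun c hc => eventually_congr ?_
  filter_upwards [eventually_gt_atTop 0] with Q hQ
  have hpos : 0 < c / Q ^ ω := by positivity
  constructor
  · rintro ⟨q, hq, p, hp, hqQ⟩
    refine ⟨_, ⟨q, hq, (pi_norm_le_iff_of_nonneg hQ.le).2 hqQ, p, rfl⟩, ?_⟩
    exact (pi_norm_lt_iff hpos).2 hp
  · rintro ⟨_, ⟨q, hq, hqQ, p, rfl⟩, hp⟩
    exact ⟨q, hq, p, (pi_norm_lt_iff hpos).1 hp, (pi_norm_le_iff_of_nonneg hQ.le).1 hqQ⟩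

variable {s m : ℕ}

/-- The coefficient vectors of the affine forms `x ↦ q̂ · (x, x̃A) + p 0`, where `q̂ ∈ ℤ^(s+m)`
has first `s` entries `p 1, …, p s` and last `m` entries `q`, and `0 < ‖q̂‖ ≤ Q`. -/
def coeffVectors (A : Matrix (Fin (s + 1)) (Fin m) ℝ) (Q : ℝ) : Set (Fin (s + 1) → ℝ) :=
  {w | ∃ q p, (q ≠ 0 ∨ Fin.tail p ≠ 0) ∧ ‖q‖ ≤ Q ∧ ‖Fin.tail p‖ ≤ Q ∧ formValue A q p = w}

lemma affForm_formValue (A : Matrix (Fin (s + 1)) (Fin m) ℝ) (q : Fin m → ℤ)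
    (p : Fin (s + 1) → ℤ) (x : Fin s → ℝ) :
    affForm (formValue A q p) x
      = ∑ i, ((Fin.append (Fin.tail p) q i : ℤ) : ℝ) * affVec A x i + (p 0 : ℝ) := by
  have hp : (Fin.cons 1 x : Fin (s + 1) → ℝ) ⬝ᵥ (fun i => (p i : ℝ))
      = p 0 + ∑ i, (Fin.tail p i : ℝ) * x i := by
    simp [dotProduct, Fin.sum_univ_succ, Fin.tail, mul_comm]
  rw [affForm, formValue, dotProduct_add, hp, Matrix.dotProduct_mulVec, Fin.sum_univ_add]
  simp only [affVec, Fin.append_left, Fin.append_right]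
  simp only [dotProduct, Matrix.vecMul, mul_comm]
  ring

lemma append_ne_zero_iff {k l : ℕ} {p : Fin k → ℤ} {q : Fin l → ℤ} :
    Fin.append p q ≠ 0 ↔ p ≠ 0 ∨ q ≠ 0 := by
  simp only [← not_and_or, ne_eq, funext_iff, Fin.forall_fin_add, Fin.append_left,
    Fin.append_right, Pi.zero_apply]

lemma formValue_eq_add_single (A : Matrix (Fin (s + 1)) (Fin m) ℝ) (q : Fin m → ℤ)
    (p : Fin (s + 1) → ℤ) : formValue A q p
      = formValue A q (Fin.cons 0 (Fin.tail p)) + Pi.single 0 (p 0 : ℝ) := by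
  ext i
  refine Fin.cases ?_ (fun i => ?_) i <;> simp [formValue_apply, Fin.tail]

lemma isSingularVec_affVec_iff {A : Matrix (Fin (s + 1)) (Fin m) ℝ} {x : Fin s → ℝ} :
    IsSingularVec (affVec A x) ↔
      ∀ c > 0, ∀ᶠ Q : ℝ in atTop, x ∈ slabUnion (coeffVectors A Q) (c / Q ^ (s + m)) := by
  simp only [IsSingularVec, exists_pos_forall_ge_iff_eventually_atTop]
  refine forall₂_congr fun c _ => eventually_congr ?_
  filter_upwards [eventually_ge_atTop 0] with Q hQ
  constructor
  · rintro ⟨q, hq, q₀, hqx, hqQ⟩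
    obtain ⟨p, r, rfl⟩ : ∃ p r, q = Fin.append p r := ⟨_, _, (Fin.append_castAdd_natAdd).symm⟩
    have hbound := (Fin.forall_fin_add _).1 hqQ
    simp only [Fin.append_left, Fin.append_right] at hbound
    refine ⟨formValue A r (Fin.cons q₀ p), ⟨r, Fin.cons q₀ p, ?_, ?_, ?_, rfl⟩, ?_⟩
    · rwa [Fin.tail_cons, or_comm, ← append_ne_zero_iff]
    · exact (pi_norm_le_iff_of_nonneg hQ).2 hbound.2
    · exact (pi_norm_le_iff_of_nonneg hQ).2 hbound.1
    · rwa [affForm_formValue]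
  · rintro ⟨_, ⟨q, p, hne, hq, hp, rfl⟩, hx⟩
    refine ⟨Fin.append (Fin.tail p) q, append_ne_zero_iff.2 hne.symm, p 0,
      by rwa [← affForm_formValue], ?_⟩
    simpa only [Fin.forall_fin_add, Fin.append_left, Fin.append_right] using
      ⟨(pi_norm_le_iff_of_nonneg hQ).1 hp, (pi_norm_le_iff_of_nonneg hQ).1 hq⟩

lemma exists_norm_mulVec_le {ι κ : Type*} [Fintype ι] [Fintype κ] (A : Matrix ι κ ℝ) :
    ∃ L ≥ 0, ∀ v, ‖A *ᵥ v‖ ≤ L * ‖v‖ := by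
  classical
  exact ⟨_, norm_nonneg _, (Matrix.toLin' A).toContinuousLinearMap.le_opNorm⟩

lemma exists_abs_affForm_le (x : Fin s → ℝ) :
    ∃ B > 0, ∀ w : Fin (s + 1) → ℝ, |affForm w x| ≤ B * ‖w‖ := by
  refine ⟨(s + 1) * ‖(Fin.cons 1 x : Fin (s + 1) → ℝ)‖ + 1, by positivity, fun w => ?_⟩
  have h := abs_dotProduct_le_card_mul_norm (Fin.cons 1 x : Fin (s + 1) → ℝ) w
  rw [Fintype.card_fin, Nat.cast_add_one, ← mul_assoc] at h
  exact h.trans (by linarith [norm_nonneg w])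

lemma mem_coeffVectors_of_mem_formValues {A : Matrix (Fin (s + 1)) (Fin m) ℝ} {L R : ℝ}
    (hL₀ : 0 ≤ L) (hL : ∀ v, ‖A *ᵥ v‖ ≤ L * ‖v‖) {w : Fin (s + 1) → ℝ}
    (hw : w ∈ formValues A R) (hwR : ‖w‖ ≤ R) : w ∈ coeffVectors A ((L + 1) * R) := by
  obtain ⟨q, hq, hqR, p, rfl⟩ := hw
  have hR : 0 ≤ R := (norm_nonneg q).trans hqR
  have hp : (fun i => (p i : ℝ)) = formValue A q p - A *ᵥ fun j => (q j : ℝ) := by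
    rw [formValue, add_sub_cancel_left]
  refine ⟨q, p, Or.inl hq, by nlinarith, ?_, rfl⟩
  calc ‖Fin.tail p‖ = ‖Fin.tail fun i => (p i : ℝ)‖ := (norm_intCast_comp _).symm
    _ ≤ ‖fun i => (p i : ℝ)‖ := norm_tail_le _
    _ ≤ ‖formValue A q p‖ + ‖A *ᵥ fun j => (q j : ℝ)‖ := hp ▸ norm_sub_le _ _
    _ ≤ R + L * R := by
      gcongr
      refine (hL _).trans ?_
      rw [norm_intCast_comp]
      gcongr
    _ = (L + 1) * R := by ring

theorem isSingularVec_affVec_of_isMatSingular {A : Matrix (Fin (s + 1)) (Fin m) ℝ}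
    (hA : IsMatSingular A ((s + m : ℕ) : ℝ)) (x : Fin s → ℝ) : IsSingularVec (affVec A x) := by
  obtain ⟨L, hL₀, hL⟩ := exists_norm_mulVec_le A
  obtain ⟨B, hB₀, hB⟩ := exists_abs_affForm_le x
  refine isSingularVec_affVec_iff.2 fun c hc => ?_
  set c' := c / (B * (L + 1) ^ (s + m)) with hc'
  have hc'₀ : 0 < c' := by positivity
  have hrescale : Tendsto (fun Q : ℝ => Q / (L + 1)) atTop atTop :=
    tendsto_id.atTop_div_const (by positivity)
  filter_upwards [hrescale.eventually (isMatSingular_iff.1 hA c' hc'₀),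
    hrescale.eventually_ge_atTop (max 1 c')] with Q ⟨w, hw, hwQ⟩ hQ
  set R := Q / (L + 1)
  have hQR : Q = (L + 1) * R := (mul_div_cancel₀ Q (by positivity)).symm
  obtain ⟨hR₁, hc'R⟩ := max_le_iff.1 hQ
  rw [Real.rpow_natCast] at hwQ
  have hwR : ‖w‖ ≤ R := hwQ.le.trans ((div_le_self hc'₀.le (one_le_pow₀ hR₁)).trans hc'R)
  refine ⟨w, hQR ▸ mem_coeffVectors_of_mem_formValues hL₀ hL hw hwR, ?_⟩
  calc |affForm w x| ≤ B * ‖w‖ := hB w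
    _ < B * (c' / R ^ (s + m)) := by gcongr
    _ = c / Q ^ (s + m) := by
      rw [hc', hQR, mul_pow]
      field_simp

end Singularity

section MeasureEstimate

variable {s m : ℕ} {μ : Measure (Fin s → ℝ)} {C M : ℝ}

lemma HasSlabBound.norm_tail_mul_measureReal_near_int_le [IsFiniteMeasure μ]
    (hμ : HasSlabBound μ C) (hM₀ : 0 ≤ M) (hM : ∀ᵐ x ∂μ, ‖x‖ ≤ M) {η : ℝ} (hη₀ : 0 ≤ η)
    (hη : η ≤ 1) (w : Fin (s + 1) → ℝ) :
    ‖Fin.tail w‖ * μ.real {x | ∃ k : ℤ, |affForm w x + k| < η}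
      ≤ (2 * s * M * ‖Fin.tail w‖ + 3) * (C * η) := by
  classical
  have hC := hμ.nonneg
  rcases (norm_nonneg (Fin.tail w)).eq_or_lt with hw | hw
  · rw [← hw, zero_mul]
    positivity
  set T := s * M * ‖Fin.tail w‖ + 1 with hT
  have hT₀ : 0 ≤ T := by positivity
  set K := Finset.Icc ⌈-w 0 - T⌉ ⌊-w 0 + T⌋
  set W := K.image fun k : ℤ => w + Pi.single 0 (k : ℝ)
  have hcover : ∀ᵐ x ∂μ, x ∈ {x | ∃ k : ℤ, |affForm w x + k| < η} → x ∈ slabUnion W η := by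
    filter_upwards [hM] with x hx ⟨k, hk⟩
    have hkK : k ∈ K := mem_Icc_of_abs_affForm_add_intCast_lt hx hη hk
    exact ⟨w + Pi.single 0 (k : ℝ), Finset.mem_coe.2 (Finset.mem_image_of_mem _ hkK),
      by rwa [affForm_add_single_zero]⟩
  have hnorm : ∀ v ∈ W, ‖Fin.tail w‖ ≤ ‖v‖ := by
    intro v hv
    obtain ⟨k, _, rfl⟩ := Finset.mem_image.1 hv
    exact tail_add_single_zero w k ▸ norm_tail_le _
  have hcard : (W.card : ℝ) ≤ 2 * s * M * ‖Fin.tail w‖ + 3 := by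
    calc (W.card : ℝ) ≤ K.card := mod_cast Finset.card_image_le
      _ ≤ (-w 0 + T) - (-w 0 - T) + 1 := card_Icc_ceil_floor_le (by linarith)
      _ = 2 * s * M * ‖Fin.tail w‖ + 3 := by ring
  calc ‖Fin.tail w‖ * μ.real {x | ∃ k : ℤ, |affForm w x + k| < η}
      ≤ ‖Fin.tail w‖ * (W.card * (C * η / ‖Fin.tail w‖)) := by
        gcongr
        exact (measureReal_le_of_ae_imp hcover).trans
          (hμ.measureReal_slabUnion_finset_le W hη₀ hw hnorm)
    _ = W.card * (C * η) := by field_simp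
    _ ≤ (2 * s * M * ‖Fin.tail w‖ + 3) * (C * η) := by gcongr

/-- The points at which the form `x ↦ x̃ · (A q + p)` is within `η` of an integer, for some `q`
and `p` of norm at most `Q` such that the linear part of the form has norm at least `δ`. -/
def steepSlabs (A : Matrix (Fin (s + 1)) (Fin m) ℝ) (Q δ η : ℝ) : Set (Fin s → ℝ) :=
  {x | ∃ q : Fin m → ℤ, ∃ p : Fin s → ℤ, ‖q‖ ≤ Q ∧ ‖p‖ ≤ Q ∧
    δ ≤ ‖Fin.tail (formValue A q (Fin.cons 0 p))‖ ∧
    ∃ k : ℤ, |affForm (formValue A q (Fin.cons 0 p)) x + k| < η}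

lemma HasSlabBound.measureReal_steepSlabs_le [IsFiniteMeasure μ] (hμ : HasSlabBound μ C)
    (hM₀ : 0 ≤ M) (hM : ∀ᵐ x ∂μ, ‖x‖ ≤ M) {δ η Q : ℝ} (hδ : 0 < δ) (hη₀ : 0 ≤ η) (hη : η ≤ 1)
    (hQ : 1 ≤ Q) (A : Matrix (Fin (s + 1)) (Fin m) ℝ) :
    μ.real (steepSlabs A Q δ η) ≤ (3 * Q) ^ (s + m) * ((2 * s * M + 3 / δ) * (C * η)) := by
  classical
  have hC := hμ.nonneg
  set I := (intBall (Fin m) Q ×ˢ intBall (Fin s) Q).filter fun qp =>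
    δ ≤ ‖Fin.tail (formValue A qp.1 (Fin.cons 0 qp.2))‖ with hI
  have hunion : steepSlabs A Q δ η
      = ⋃ qp ∈ I, {x | ∃ k : ℤ, |affForm (formValue A qp.1 (Fin.cons 0 qp.2)) x + k| < η} := by
    ext x
    simp [steepSlabs, hI, mem_intBall (zero_le_one.trans hQ), and_assoc]
  have hcard : (I.card : ℝ) ≤ (3 * Q) ^ (s + m) := by
    calc (I.card : ℝ) ≤ (intBall (Fin m) Q).card * (intBall (Fin s) Q).card := by
          rw [← Nat.cast_mul, ← Finset.card_product]
          exact mod_cast Finset.card_filter_le _ _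
      _ ≤ (3 * Q) ^ m * (3 * Q) ^ s := by
          have hm := card_intBall_le (ι := Fin m) hQ
          have hs := card_intBall_le (ι := Fin s) hQ
          rw [Fintype.card_fin] at hm hs
          gcongr
      _ = (3 * Q) ^ (s + m) := by rw [← pow_add, add_comm]
  have hterm : ∀ qp ∈ I,
      μ.real {x | ∃ k : ℤ, |affForm (formValue A qp.1 (Fin.cons 0 qp.2)) x + k| < η}
        ≤ (2 * s * M + 3 / δ) * (C * η) := by
    intro qp hqp
    set t := ‖Fin.tail (formValue A qp.1 (Fin.cons 0 qp.2))‖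
    have hδt : δ ≤ t := (Finset.mem_filter.1 hqp).2
    have ht : 0 < t := hδ.trans_le hδt
    refine le_of_mul_le_mul_left ?_ ht
    calc t * _ ≤ (2 * s * M * t + 3) * (C * η) :=
          hμ.norm_tail_mul_measureReal_near_int_le hM₀ hM hη₀ hη _
      _ = t * ((2 * s * M + 3 / t) * (C * η)) := by field_simp
      _ ≤ t * ((2 * s * M + 3 / δ) * (C * η)) := by gcongr
  calc μ.real (steepSlabs A Q δ η) ≤ I.card * ((2 * s * M + 3 / δ) * (C * η)) := by
        rw [hunion, ← nsmul_eq_mul]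
        exact (measureReal_biUnion_finset_le I _).trans (Finset.sum_le_card_nsmul _ _ _ hterm)
    _ ≤ (3 * Q) ^ (s + m) * ((2 * s * M + 3 / δ) * (C * η)) := by gcongr

lemma HasSlabBound.measureReal_slabUnion_formValues_le [IsFiniteMeasure μ]
    (hμ : HasSlabBound μ C) {τ η Q : ℝ} (hτ : 0 < τ) (hη : 0 ≤ η) (hQ : 1 ≤ Q)
    (A : Matrix (Fin (s + 1)) (Fin m) ℝ) :
    μ.real (slabUnion {w ∈ formValues A Q | τ ≤ ‖w‖ ∧ ‖w‖ < 1 / 2} η)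
      ≤ (3 * Q) ^ m * (C * η / τ) := by
  classical
  have hC := hμ.nonneg
  set W := ((intBall (Fin m) Q).image fun q => formValue A q (nearestInt A q)).filter
    (τ ≤ ‖·‖)
  have hsub : {w ∈ formValues A Q | τ ≤ ‖w‖ ∧ ‖w‖ < 1 / 2} ⊆ (W : Set (Fin (s + 1) → ℝ)) := by
    rintro _ ⟨⟨q, _, hqQ, p, rfl⟩, hτw, hw⟩
    obtain rfl := eq_nearestInt_of_norm_formValue_lt hw
    exact Finset.mem_coe.2 (Finset.mem_filter.2
      ⟨Finset.mem_image_of_mem _ ((mem_intBall (zero_le_one.trans hQ)).2 hqQ), hτw⟩)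
  have hcard : (W.card : ℝ) ≤ (3 * Q) ^ m := by
    calc (W.card : ℝ) ≤ (intBall (Fin m) Q).card :=
          mod_cast (Finset.card_filter_le _ _).trans Finset.card_image_le
      _ ≤ (3 * Q) ^ m := by simpa using card_intBall_le (ι := Fin m) hQ
  calc μ.real _ ≤ μ.real (slabUnion W η) := measureReal_mono (slabUnion_mono hsub η)
    _ ≤ W.card * (C * η / τ) :=
        hμ.measureReal_slabUnion_finset_le W hη hτ fun w hw => (Finset.mem_filter.1 hw).2
    _ ≤ (3 * Q) ^ m * (C * η / τ) := by gcongr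

lemma mem_of_mem_slabUnion_coeffVectors {A : Matrix (Fin (s + 1)) (Fin m) ℝ} {Q δ η : ℝ}
    {x : Fin s → ℝ} (τ : ℝ) (hx : ‖x‖ ≤ M) (hMδ : s * M * δ ≤ 1 / 4) (hδ : δ ≤ 1 / 2)
    (hη : η ≤ 1 / 4) (hmem : x ∈ slabUnion (coeffVectors A Q) η) :
    x ∈ steepSlabs A Q δ η ∪ slabUnion {w ∈ formValues A Q | τ ≤ ‖w‖ ∧ ‖w‖ < 1 / 2} η
      ∪ slabUnion {w ∈ formValues A Q | ‖w‖ < τ} η := by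
  have hM₀ : 0 ≤ M := (norm_nonneg x).trans hx
  obtain ⟨w, ⟨q, p, hne, hqQ, hpQ, hqp⟩, hwx⟩ := hmem
  rcases le_or_gt δ ‖Fin.tail w‖ with hsteep | hflat
  · refine Or.inl (Or.inl ⟨q, Fin.tail p, hqQ, hpQ, ?_, p 0, ?_⟩)
    · rwa [← tail_add_single_zero _ (p 0 : ℝ), ← formValue_eq_add_single, hqp]
    · rwa [← affForm_add_single_zero, ← formValue_eq_add_single, hqp]
  have hw : ‖w‖ < 1 / 2 := by
    have hdist := abs_le.1 (abs_affForm_sub_le hx w)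
    have hwη := abs_lt.1 hwx
    have htail : s * M * ‖Fin.tail w‖ ≤ s * M * δ := by gcongr
    exact (norm_le_max_abs_norm_tail w).trans_lt
      (max_lt (abs_lt.2 ⟨by linarith, by linarith⟩) (hflat.trans_le hδ))
  have hq : q ≠ 0 := by
    rintro rfl
    obtain rfl : p = 0 := eq_zero_of_norm_formValue_lt_one (A := A) (q := 0)
      (by ext; simp [Matrix.mulVec]) (by rw [hqp]; linarith)
    exact hne.elim (· rfl) (· rfl)
  have hwQ : w ∈ formValues A Q := ⟨q, hq, hqQ, p, hqp⟩
  rcases le_or_gt τ ‖w‖ with hτw | hτw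
  · exact Or.inl (Or.inr ⟨w, ⟨hwQ, hτw, hw⟩, hwx⟩)
  · exact Or.inr ⟨w, ⟨hwQ, hτw⟩, hwx⟩

lemma HasSlabBound.exists_measureReal_slabUnion_coeffVectors_le [IsFiniteMeasure μ]
    (hμ : HasSlabBound μ C) (hM₀ : 0 ≤ M) (hM : ∀ᵐ x ∂μ, ‖x‖ ≤ M)
    (A : Matrix (Fin (s + 1)) (Fin m) ℝ) {c δ : ℝ} (hc : 0 < c) (hδ : 0 < δ) :
    ∃ K, ∀ Q ≥ 1, SmallValuesOnLine A Q (δ / Q ^ s) →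
      (∀ w ∈ formValues A Q, c / Q ^ (s + m) ≤ ‖w‖) →
      ∀ ε ∈ Set.Ioc 0 (1 / 4), μ.real (slabUnion (coeffVectors A Q) (ε / Q ^ (s + m))) ≤ K * ε := by
  set σ := 1 / (4 * (s * M + 1)) with hσ
  have hσ₀ : 0 < σ := by positivity
  have hσM : s * M * σ + σ = 1 / 4 := by
    rw [hσ]
    field_simp
  have hMσ : 0 ≤ s * M * σ := by positivity
  refine ⟨3 ^ (s + m) * ((2 * s * M + 3 / σ) * C) + 3 ^ m * (C / δ) + C / c,
    fun Q hQ ⟨e, he⟩ hbelow ε ⟨hε₀, hε⟩ => ?_⟩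
  have : 0 < Q := zero_lt_one.trans_le hQ
  set η := ε / Q ^ (s + m) with hη
  have hη₀ : 0 ≤ η := by positivity
  have hη₁ : η ≤ 1 / 4 := (div_le_self hε₀.le (one_le_pow₀ hQ)).trans hε
  have hcover := hM.mono fun x hx => mem_of_mem_slabUnion_coeffVectors (A := A) (Q := Q)
    (δ := σ) (δ / Q ^ s) hx (by linarith) (by linarith) hη₁
  have hsteep := hμ.measureReal_steepSlabs_le hM₀ hM hσ₀ hη₀ (by linarith) hQ A
  have hmedium := hμ.measureReal_slabUnion_formValues_le (τ := δ / Q ^ s) (by positivity) hη₀ hQ A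
  have hsmall := hμ.measureReal_slabUnion_line_le
    (W := {w ∈ formValues A Q | ‖w‖ < δ / Q ^ s}) (ρ := c / Q ^ (s + m)) hη₀ (by positivity)
    (fun w hw => he w hw.1 hw.2) fun w hw => hbelow w hw.1
  calc μ.real (slabUnion (coeffVectors A Q) η) ≤ _ := measureReal_le_of_ae_imp hcover
    _ ≤ _ := (measureReal_union_le _ _).trans
        (add_le_add ((measureReal_union_le _ _).trans (add_le_add hsteep hmedium)) hsmall)
    _ = _ := by
      rw [hη, mul_pow, mul_pow, pow_add Q]
      field_simp

theorem HasSlabBound.ae_not_isSingularVec_affVec [IsFiniteMeasure μ] (hμ : HasSlabBound μ C)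
    (hM₀ : 0 ≤ M) (hM : ∀ᵐ x ∂μ, ‖x‖ ≤ M) {A : Matrix (Fin (s + 1)) (Fin m) ℝ} {δ : ℝ}
    (hδ : 0 < δ) (hline : ∀ Q ≥ 1, SmallValuesOnLine A Q (δ / Q ^ s))
    (hA : ¬ IsMatSingular A ((s + m : ℕ) : ℝ)) : ∀ᵐ x ∂μ, ¬ IsSingularVec (affVec A x) := by
  simp only [isMatSingular_iff, not_forall, not_eventually, not_exists, not_and, not_lt,
    Real.rpow_natCast] at hA
  obtain ⟨c, hc, hbelow⟩ := hA
  obtain ⟨K, hK⟩ := hμ.exists_measureReal_slabUnion_coeffVectors_le hM₀ hM A hc hδ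
  have hbound : ∀ ε ∈ Set.Ioc (0 : ℝ) (1 / 4),
      μ {x | IsSingularVec (affVec A x)} ≤ ENNReal.ofReal (K * ε) := by
    intro ε hε
    refine (measure_mono fun x hx => isSingularVec_affVec_iff.1 hx ε hε.1).trans
      (measure_setOf_eventually_mem_le ?_)
    refine (hbelow.and_eventually (eventually_ge_atTop 1)).mono fun Q hQ => ?_
    rw [← ofReal_measureReal]
    exact ENNReal.ofReal_le_ofReal (hK Q hQ.2 (hline Q hQ.2) hQ.1 ε hε)
  have hlim : Tendsto (fun ε => ENNReal.ofReal (K * ε)) (nhdsWithin 0 (Set.Ioi 0)) (nhds 0) := by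
    have hcont : Continuous fun ε => ENNReal.ofReal (K * ε) :=
      ENNReal.continuous_ofReal.comp (continuous_const_mul K)
    simpa using (hcont.tendsto 0).mono_left nhdsWithin_le_nhds
  simp only [ae_iff, not_not]
  exact le_antisymm (ge_of_tendsto hlim
    (mem_of_superset (Ioc_mem_nhdsGT (by norm_num)) hbound)) bot_le

theorem ae_not_isSingularVec_affVec {A : Matrix (Fin (s + 1)) (Fin m) ℝ} {δ : ℝ} (hδ : 0 < δ)
    (hline : ∀ Q ≥ 1, SmallValuesOnLine A Q (δ / Q ^ s))
    (hA : ¬ IsMatSingular A ((s + m : ℕ) : ℝ)) :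
    ∀ᵐ x ∂(volume : Measure (Fin s → ℝ)), ¬ IsSingularVec (affVec A x) := by
  rw [← Measure.restrict_univ (μ := volume), ← Metric.iUnion_closedBall_nat (0 : Fin s → ℝ),
    ae_restrict_iUnion_iff]
  intro N
  obtain ⟨C, hC⟩ := exists_hasSlabBound_restrict_closedBall (s := s) N.cast_nonneg
  have hfinite : IsFiniteMeasure (volume.restrict (Metric.closedBall (0 : Fin s → ℝ) N)) :=
    isFiniteMeasure_restrict.2 measure_closedBall_lt_top.ne
  refine hC.ae_not_isSingularVec_affVec N.cast_nonneg ?_ hδ hline hA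
  filter_upwards [ae_restrict_mem measurableSet_closedBall] with x hx
  exact mem_closedBall_zero_iff.1 hx

end MeasureEstimate

section RationalMultiples

lemma exists_ratCast_eq_intCast_mul {ι : Type*} [Finite ι] (r : ι → ℚ) :
    ∃ (z : ι → ℤ) (t : ℝ), ∀ i, (r i : ℝ) = z i * t := by
  obtain ⟨N, hN⟩ := IsLocalization.exist_integer_multiples_of_finite (nonZeroDivisors ℤ) r
  choose z hz using hN
  have hN₀ : ((N : ℤ) : ℚ) ≠ 0 := mod_cast nonZeroDivisors.coe_ne_zero N
  refine ⟨z, ((N : ℤ) : ℝ)⁻¹, fun i => ?_⟩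
  have hzi : (z i : ℚ) = N * r i := by simpa [Submonoid.smul_def] using hz i
  have hri : r i = z i * ((N : ℤ) : ℚ)⁻¹ := by
    rw [hzi]
    field_simp
  rw [hri]
  push_cast
  rfl

lemma mem_span_singleton_of_mul_eq_mul {ι : Type*} {v w : ι → ℝ} {j : ι} (hj : v j ≠ 0)
    (h : ∀ i, w i * v j = w j * v i) : w ∈ Submodule.span ℝ {v} := by
  refine Submodule.mem_span_singleton.2 ⟨w j / v j, funext fun i => ?_⟩
  rw [Pi.smul_apply, smul_eq_mul, div_mul_eq_mul_div, div_eq_iff hj, h]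

lemma eq_of_sub_eq_intCast {a b : ℝ} {k : ℤ} (h : a - b = k) (ha : |a| < 1 / 2)
    (hb : |b| < 1 / 2) : a = b := by
  have hk : |(k : ℝ)| < 1 := by
    rw [← h]
    linarith [abs_sub a b]
  rw [← sub_eq_zero, h, int_eq_zero_of_abs_cast_lt_one hk, Int.cast_zero]

variable {ι κ : Type*} [Fintype κ] {A : Matrix ι κ ℝ}

lemma mulVec_apply_of_columns {v : ι → ℝ} {z : κ → ℤ}
    (hA : ∀ i j, A i j = z j * v i) (q : κ → ℤ) (i : ι) :
    (A *ᵥ fun j => (q j : ℝ)) i = (z ⬝ᵥ q : ℤ) * v i := by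
  simp only [Matrix.mulVec, dotProduct, hA, Int.cast_sum, Int.cast_mul, Finset.sum_mul]
  exact Finset.sum_congr rfl fun j _ => by ring

variable [Fintype ι]

section Rows

variable {z : ι → ℤ} {u : κ → ℝ}

lemma formValue_mul_comm_of_rows (hA : ∀ i j, A i j = z i * u j) {q : κ → ℤ} {p : ι → ℤ}
    (hsmall : ‖formValue A q p‖ * ‖z‖ < 1 / 2) (i j : ι) :
    formValue A q p i * z j = formValue A q p j * z i := by
  have hvalue (i : ι) : formValue A q p i = z i * (∑ j, u j * q j) + p i := by
    simp only [formValue_apply, hA, Finset.mul_sum, mul_assoc]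
  have hproduct (i j : ι) : |formValue A q p i * z j| < 1 / 2 := by
    rw [abs_mul]
    refine lt_of_le_of_lt ?_ hsmall
    have hzj : |(z j : ℝ)| ≤ ‖z‖ := (Int.norm_cast_real _).trans_le (norm_le_pi_norm z j)
    gcongr
    exact norm_le_pi_norm (formValue A q p) i
  refine eq_of_sub_eq_intCast (k := p i * z j - p j * z i) ?_ (hproduct i j) (hproduct j i)
  rw [hvalue, hvalue]
  push_cast
  ring

lemma smallValuesOnLine_of_rows (hA : ∀ i j, A i j = z i * u j) {τ : ℝ}
    (hτ : τ * (‖z‖ + 1) ≤ 1 / 2) (Q : ℝ) : SmallValuesOnLine A Q τ := by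
  refine ⟨fun i => z i, ?_⟩
  rintro _ ⟨q, -, -, p, rfl⟩ hp
  have hsmall : ‖formValue A q p‖ * (‖z‖ + 1) < 1 / 2 :=
    (mul_lt_mul_of_pos_right hp (by positivity)).trans_le hτ
  have hnorm := norm_nonneg (formValue A q p)
  have hmul := mul_nonneg hnorm (norm_nonneg z)
  by_cases hz : ∃ j, z j ≠ 0
  · obtain ⟨j, hj⟩ := hz
    exact mem_span_singleton_of_mul_eq_mul (Int.cast_ne_zero.2 hj) fun i =>
      formValue_mul_comm_of_rows hA (by linarith) i j
  · push Not at hz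
    have hq : A *ᵥ (fun j => (q j : ℝ)) = 0 := by
      ext i
      simp [Matrix.mulVec, dotProduct, hA, hz]
    rw [formValue_eq_zero_of_norm_lt_one hq (by linarith)]
    exact Submodule.zero_mem _

end Rows

section Columns

variable {v : ι → ℝ} {z : κ → ℤ}

lemma smul_formValue_eq_smul_formValue_of_columns (hA : ∀ i j, A i j = z j * v i) {R τ : ℝ}
    (hRτ : R * τ < 1 / 2) {q q' : κ → ℤ} {p p' : ι → ℤ}
    (hq : |((z ⬝ᵥ q : ℤ) : ℝ)| ≤ R) (hq' : |((z ⬝ᵥ q' : ℤ) : ℝ)| ≤ R)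
    (hp : ‖formValue A q p‖ ≤ τ) (hp' : ‖formValue A q' p'‖ ≤ τ) :
    ((z ⬝ᵥ q' : ℤ) : ℝ) • formValue A q p = ((z ⬝ᵥ q : ℤ) : ℝ) • formValue A q' p' := by
  have hproduct {a : ℝ} {w : ι → ℝ} (ha : |a| ≤ R) (hw : ‖w‖ ≤ τ) (i : ι) :
      |a * w i| < 1 / 2 := by
    rw [abs_mul]
    refine lt_of_le_of_lt (mul_le_mul ha ?_ (abs_nonneg _) ((abs_nonneg a).trans ha)) hRτ
    exact (norm_le_pi_norm w i).trans hw
  ext i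
  refine eq_of_sub_eq_intCast (k := (z ⬝ᵥ q') * p i - (z ⬝ᵥ q) * p' i) ?_
    (hproduct hq' hp i) (hproduct hq hp' i)
  simp only [Pi.smul_apply, smul_eq_mul, formValue, Pi.add_apply, mulVec_apply_of_columns hA]
  push_cast
  ring

lemma smallValuesOnLine_of_columns (hA : ∀ i j, A i j = z j * v i) {Q τ : ℝ} (hτ₁ : τ ≤ 1)
    (hτ : Fintype.card κ * (‖z‖ * Q) * τ < 1 / 2) : SmallValuesOnLine A Q τ := by
  have hdot {q : κ → ℤ} (hq : ‖q‖ ≤ Q) :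
      |((z ⬝ᵥ q : ℤ) : ℝ)| ≤ Fintype.card κ * (‖z‖ * Q) :=
    (abs_intCast_dotProduct_le z q).trans (by gcongr)
  by_cases hex : ∃ q' p', ‖q'‖ ≤ Q ∧ ‖formValue A q' p'‖ < τ ∧ z ⬝ᵥ q' ≠ 0
  · obtain ⟨q', p', hq', hp', hne⟩ := hex
    refine ⟨formValue A q' p', ?_⟩
    rintro _ ⟨q, -, hq, p, rfl⟩ hp
    have hne' : ((z ⬝ᵥ q' : ℤ) : ℝ) ≠ 0 := Int.cast_ne_zero.2 hne
    rw [← Submodule.smul_mem_iff _ hne', smul_formValue_eq_smul_formValue_of_columns hA hτ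
      (hdot hq) (hdot hq') hp.le hp'.le]
    exact Submodule.smul_mem _ _ (Submodule.mem_span_singleton_self _)
  · push Not at hex
    refine ⟨0, ?_⟩
    rintro _ ⟨q, -, hq, p, rfl⟩ hp
    have hq₀ : A *ᵥ (fun j => (q j : ℝ)) = 0 := by
      ext i
      rw [mulVec_apply_of_columns hA, hex q p hq hp, Int.cast_zero, zero_mul, Pi.zero_apply]
    rw [formValue_eq_zero_of_norm_lt_one hq₀ (hp.trans_le hτ₁)]
    exact Submodule.zero_mem _

end Columns

lemma exists_smallValuesOnLine_of_rational_rows {u : κ → ℝ} {r : ι → ℚ}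
    (hA : ∀ i j, A i j = r i * u j) : ∃ δ > 0, ∀ Q, SmallValuesOnLine A Q δ := by
  obtain ⟨z, t, hz⟩ := exists_ratCast_eq_intCast_mul r
  have hA' : ∀ i j, A i j = z i * (t * u j) := fun i j => by rw [hA, hz, mul_assoc]
  refine ⟨1 / (2 * (‖z‖ + 1)), by positivity, smallValuesOnLine_of_rows hA' ?_⟩
  field_simp
  exact le_rfl

lemma exists_smallValuesOnLine_of_rational_columns {v : ι → ℝ} {r : κ → ℚ}
    (hA : ∀ i j, A i j = r j * v i) : ∃ δ > 0, ∀ Q ≥ 1, SmallValuesOnLine A Q (δ / Q) := by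
  obtain ⟨z, t, hz⟩ := exists_ratCast_eq_intCast_mul r
  have hA' : ∀ i j, A i j = z j * (t * v i) := fun i j => by rw [hA, hz, mul_assoc]
  set N := Fintype.card κ * ‖z‖ with hN
  have hN₀ : 0 ≤ N := by positivity
  refine ⟨1 / (2 * (N + 1)), by positivity, fun Q hQ => ?_⟩
  have : 0 < Q := zero_lt_one.trans_le hQ
  refine smallValuesOnLine_of_columns hA' ?_ ?_
  · rw [div_div]
    exact div_le_one_of_le₀ (by nlinarith) (by positivity)
  · rw [← mul_assoc, ← hN]
    field_simp
    linarith

variable {s m : ℕ}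

lemma exists_smallValuesOnLine_div_pow {A : Matrix (Fin (s + 1)) (Fin m) ℝ}
    (hA : (∃ v : Fin (s + 1) → ℝ, ∃ r : Fin m → ℚ, ∀ i l, A i l = (r l : ℝ) * v i) ∨
      (∃ u : Fin m → ℝ, ∃ r : Fin (s + 1) → ℚ, ∀ i l, A i l = (r i : ℝ) * u l)) :
    ∃ δ > 0, ∀ Q ≥ 1, SmallValuesOnLine A Q (δ / Q ^ s) := by
  rcases s.eq_zero_or_pos with rfl | hs
  · refine ⟨1, one_pos, fun Q _ => ⟨1, fun w _ _ => ?_⟩⟩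
    exact mem_span_singleton_of_mul_eq_mul (j := 0) one_ne_zero fun i => by
      rw [Fin.fin_one_eq_zero i]
  rcases hA with ⟨v, r, hA⟩ | ⟨u, r, hA⟩
  · obtain ⟨δ, hδ, hline⟩ := exists_smallValuesOnLine_of_rational_columns hA
    refine ⟨δ, hδ, fun Q hQ => (hline Q hQ).mono ?_⟩
    gcongr
    exact le_self_pow₀ hQ hs.ne'
  · obtain ⟨δ, hδ, hline⟩ := exists_smallValuesOnLine_of_rational_rows hA
    exact ⟨δ, hδ, fun Q hQ => (hline Q).mono (div_le_self hδ.le (one_le_pow₀ hQ))⟩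

end RationalMultiples

/-- Theorem: writing `n = s + m` with `m = n - s ≥ 1`, if all columns (resp. all rows) of `A`
are rational multiples of a single vector, then `A` is not `n`-singular iff Lebesgue-a.e.
point of `𝓛_A` is not singular. -/
theorem stmt_2 (s m : ℕ) (hm : 1 ≤ m) (A : Matrix (Fin (s+1)) (Fin m) ℝ)
    (hcond : (∃ v : Fin (s+1) → ℝ, ∃ r : Fin m → ℚ, ∀ i l, A i l = (r l : ℝ) * v i) ∨
             (∃ u : Fin m → ℝ, ∃ r : Fin (s+1) → ℚ, ∀ i l, A i l = (r i : ℝ) * u l)) :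
    ¬ IsMatSingular A ((s + m : ℕ) : ℝ) ↔
      ∀ᵐ x ∂(volume : Measure (Fin s → ℝ)), ¬ IsSingularVec (affVec A x) := by
  constructor
  · intro hA
    obtain ⟨δ, hδ, hline⟩ := exists_smallValuesOnLine_div_pow hcond
    exact ae_not_isSingularVec_affVec hδ hline hA
  · intro hae hA
    obtain ⟨x, hx⟩ := hae.exists
    exact hx (isSingularVec_affVec_of_isMatSingular hA x)
end

section
/- Let n ≥ 1, let X be a Besicovitch metric space, x₀ ∈ X, r > 0, B = B(x₀, r), B̃ = B(x₀, 3^{n+1}r), let μ be a Radon measure on X which is D-Federer on B̃ for some D > 0 (i.e. μ(B(y,3ρ)) ≤ D·μ(B(y,ρ)) whenever y ∈ supp μ and B(y,3ρ) ⊆ B̃), and let f: B̃ → ℝ^n be continuous. Assume: (1) there exist C, α > 0 such that for every k ∈ ℕ and every nonzero primitive subgroup Γ ⊆ ℤ^{n+1}, the function x ↦ cov(g_k u_{f(x)} Γ) is (C,α)-good on B̃ with respect to μ; (2) there exist c > 0 and a sequence of natural numbers k_i → ∞ such that for every i and every nonzero primitive subgroup Γ ⊆ ℤ^{n+1}, sup{cov(g_{k_i}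 u_{f(x)} Γ) : x ∈ B ∩ supp μ} ≥ c^{rank Γ}. Then μ({x ∈ B : f(x) is singular}) = 0. -/
open MeasureTheory Filter

/-- The support of a measure on a metric space. -/
def measSupport {X : Type*} [MetricSpace X] [MeasurableSpace X] (μ : Measure X) : Set X :=
  {x | ∀ r : ℝ, 0 < r → 0 < μ (Metric.ball x r)}

/-- A Besicovitch metric space: there is `N` such that any family of balls centered at all
points of a bounded set `A` admits a countable subfamily covering `A` with multiplicity at
most `N`. -/
def IsBesicovitchSpace (X : Type*) [MetricSpace X] : Prop :=
  ∃ N : ℕ, ∀ A : Set X, Bornology.IsBounded A → ∀ r : X → ℝ, (∀ x ∈ A, 0 < r x) →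
    ∃ t : Set X, t ⊆ A ∧ t.Countable ∧ (A ⊆ ⋃ x ∈ t, Metric.ball x (r x)) ∧
      ∀ y : X, ({x | x ∈ t ∧ y ∈ Metric.ball x (r x)}).Finite ∧
        Nat.card {x | x ∈ t ∧ y ∈ Metric.ball x (r x)} ≤ N

/-- `F` is `(C,α)`-good on `U` with respect to `μ`: for every ball `B ⊆ U` centered on
`supp μ` and every `ε > 0`, `μ{x ∈ B : |F x| < ε} ≤ C (ε/‖F‖_{μ,B})^α μ(B)`. -/
def IsCAGoodOn {X : Type*} [MetricSpace X] [MeasurableSpace X] (μ : Measure X)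
    (C α : ℝ) (F : X → ℝ) (U : Set X) : Prop :=
  ∀ z ∈ measSupport μ, ∀ ρ : ℝ, 0 < ρ → Metric.ball z ρ ⊆ U → ∀ ε : ℝ, 0 < ε →
    μ {x ∈ Metric.ball z ρ | |F x| < ε} ≤
      ENNReal.ofReal
        (C * (ε / sSup ((fun x => |F x|) '' (Metric.ball z ρ ∩ measSupport μ))) ^ α) *
      μ (Metric.ball z ρ)

/-- The diagonal matrix `g_k = diag(e^{nk}, e^{-k}, …, e^{-k}) ∈ SL_{n+1}(ℝ)`. -/
noncomputable def gMat (n : ℕ) (k : ℕ) : Matrix (Fin (n+1)) (Fin (n+1)) ℝ :=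
  fun i j => if i = j then (if i = 0 then Real.exp ((n : ℝ) * (k : ℝ))
    else Real.exp (-(k : ℝ))) else 0

/-- The unipotent matrix `u_x ∈ SL_{n+1}(ℝ)` with first row `(1, x₁, …, x_n)`. -/
noncomputable def uMat {n : ℕ} (x : Fin n → ℝ) : Matrix (Fin (n+1)) (Fin (n+1)) ℝ :=
  fun i j => if i = j then 1 else if i = 0 then (Fin.cons 0 x : Fin (n+1) → ℝ) j else 0

/-- `cov(hΔ)` for the subgroup `Δ ⊆ ℤ^m` with ℤ-basis `v₁, …, v_r`. -/
noncomputable def covFam {m r : ℕ} (h : Matrix (Fin m) (Fin m) ℝ)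
    (v : Fin r → Fin m → ℤ) : ℝ :=
  ⨆ φ : Fin r → Fin m,
    |Matrix.det (Matrix.of fun a b : Fin r => h.mulVec (fun i => (v b i : ℝ)) (φ a))|

/-- `v₁, …, v_r` is a ℤ-basis of a primitive subgroup of `ℤ^m` of rank `r`. -/
def IsPrimitiveBasis {m r : ℕ} (v : Fin r → Fin m → ℤ) : Prop :=
  LinearIndependent ℤ v ∧
  ∀ w : Fin m → ℤ,
    ((fun i => (w i : ℝ)) ∈
      Submodule.span ℝ (Set.range fun a => fun i => ((v a i : ℤ) : ℝ))) →
    w ∈ Submodule.span ℤ (Set.range v)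

/-!
Singularity of `x` says that the lattices `g_k u_x ℤ^{n+1}` contain arbitrarily short nonzero
vectors for all large `k` (Dani's correspondence). Let `h` have determinant one and `ρ, τ ≤ 1`.
Suppose that the covolumes satisfy `cov(h (W ∩ ℤ^{n+1})) ≤ ρ ^ dim W` along a chain of rational
subspaces `W`, and `τ ρ ^ dim W ≤ cov(h (W ∩ ℤ^{n+1}))` for all `W` comparable with this chain. Then
every nonzero vector of `h ℤ^{n+1}` has norm at least `τ ρ / (n + 1)`: adjoining a shorter one to
the largest member of the chain not containing it would produce a subspace, still comparable with
the chain, of too small covolume.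

The points of `B` at which no such chain exists form a set of measure at most a constant times
`τ ^ α`, by induction on the length of chains. Around each bad point choose an almost maximal ball
on which the covolume of some `W` stays below `ρ ^ dim W`. On a slightly larger ball the covolume of
every subspace reaches its threshold, so induction applies to the subspaces comparable with `W`, and
goodness bounds the set where the covolume of `W` is below `τ ρ ^ dim W`. The Besicovitch and
Federer properties sum up these local estimates. As the constant does not depend on the time `k_i`,
letting `τ → 0` shows that almost no orbit diverges.
-/

open scoped ENNReal NNReal Topology Matrix

section Support

variable {X : Type*} [MetricSpace X]

theorem IsBesicovitchSpace.secondCountableTopology (hX : IsBesicovitchSpace X) :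
    SecondCountableTopology X := by
  obtain ⟨N, hN⟩ := hX
  refine Metric.secondCountable_of_almost_dense_set fun ε hε => ?_
  rcases isEmpty_or_nonempty X with hempty | ⟨⟨x₀⟩⟩
  · exact ⟨∅, Set.countable_empty, fun x => isEmptyElim x⟩
  choose t _ htc hcov _ using fun m : ℕ =>
    hN (Metric.ball x₀ m) Metric.isBounded_ball (fun _ => ε) fun _ _ => hε
  refine ⟨⋃ m, t m, Set.countable_iUnion htc, fun x => ?_⟩
  obtain ⟨m, hm⟩ := exists_nat_gt (dist x x₀)
  obtain ⟨y, hy, hxy⟩ := Set.mem_iUnion₂.1 (hcov m hm)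
  exact ⟨y, Set.mem_iUnion.2 ⟨m, hy⟩, hxy.le⟩

variable [MeasurableSpace X] {μ : Measure X}

theorem measSupport_eq_support : measSupport μ = μ.support := by
  ext x
  exact Metric.nhds_basis_ball.mem_measureSupport.symm

theorem IsBesicovitchSpace.measure_compl_measSupport (hX : IsBesicovitchSpace X) :
    μ (measSupport μ)ᶜ = 0 := by
  have := hX.secondCountableTopology
  rw [measSupport_eq_support, Measure.measure_compl_support]

end Support

section LocallyFinite

theorem isCompact_insert_iUnion_of_tendsto_smallSets {X : Type*} [TopologicalSpace X]
    {K : ℕ → Set X} {y : X} (hK : ∀ m, IsCompact (K m)) (hy : Tendsto K atTop (𝓝 y).smallSets) :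
    IsCompact (insert y (⋃ m, K m)) := by
  refine isCompact_iff_ultrafilter_le_nhds'.2 fun f hf => ?_
  by_cases hfy : ↑f ≤ 𝓝 y
  · exact ⟨y, Set.mem_insert _ _, hfy⟩
  obtain ⟨V, hV, hVf⟩ := Filter.not_le.1 hfy
  obtain ⟨M, hM⟩ := eventually_atTop.1 (tendsto_smallSets_iff.1 hy V hV)
  have hfM : ⋃ m ∈ Set.Iio M, K m ∈ f := by
    filter_upwards [hf, Ultrafilter.compl_mem_iff_notMem.2 hVf] with x hx hxV
    obtain rfl | hx := hx
    · exact absurd (mem_of_mem_nhds hV) hxV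
    obtain ⟨m, hm⟩ := Set.mem_iUnion.1 hx
    exact Set.mem_iUnion₂.2 ⟨m, not_le.1 fun h => hxV (hM m h hm), hm⟩
  obtain ⟨x, hx, hfx⟩ := isCompact_iff_ultrafilter_le_nhds'.1
    ((Set.finite_Iio M).isCompact_biUnion fun m _ => hK m) f hfM
  exact ⟨x, .inr (Set.iUnion₂_subset_iUnion _ _ hx), hfx⟩

theorem isLocallyFiniteMeasure_of_regular {X : Type*} [TopologicalSpace X]
    [FirstCountableTopology X] [MeasurableSpace X] {μ : Measure X} [μ.Regular] :
    IsLocallyFiniteMeasure μ := by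
  refine ⟨fun y => ?_⟩
  by_contra hinf
  obtain ⟨V, hV, hbasis⟩ := (nhds_basis_opens y).exists_antitone_subbasis
  have hlarge : ∀ m, ∃ K ⊆ V m, IsCompact K ∧ (m : ℝ≥0∞) < μ K := fun m =>
    (hV m).2.exists_lt_isCompact <| by
      rw [not_lt_top_iff.1 fun h => hinf ⟨V m, hbasis.mem m, h⟩]
      exact ENNReal.natCast_lt_top m
  choose K hKV hK hKμ using hlarge
  have hcomp : IsCompact (insert y (⋃ m, K m)) :=
    isCompact_insert_iUnion_of_tendsto_smallSets hK <|
      hbasis.tendsto_smallSets.smallSets_mono <| .of_forall hKV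
  obtain ⟨m, hm⟩ := ENNReal.exists_nat_gt (hcomp.measure_lt_top (μ := μ)).ne
  refine (hm.trans (hKμ m)).not_ge (measure_mono ?_)
  exact (Set.subset_iUnion K m).trans (Set.subset_insert _ _)

end LocallyFinite

section Covering

theorem tsum_measure_le_of_encard_le {X ι : Type*} [MeasurableSpace X] [Countable ι]
    {μ : Measure X} {s : ι → Set X} {V : Set X} {N : ℕ} (hs : ∀ i, MeasurableSet (s i))
    (hV : ∀ i, s i ⊆ V) (hN : ∀ y, {i | y ∈ s i}.encard ≤ N) :
    ∑' i, μ (s i) ≤ N * μ V := by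
  calc ∑' i, μ (s i) = ∑' i, ∫⁻ y in V, (s i).indicator 1 y ∂μ := by
        simp only [lintegral_indicator_one (hs _), Measure.restrict_apply (hs _),
          Set.inter_eq_left.2 (hV _)]
    _ = ∫⁻ y in V, ∑' i, (s i).indicator 1 y ∂μ :=
        (lintegral_tsum fun i => (measurable_one.indicator (hs i)).aemeasurable).symm
    _ ≤ ∫⁻ _ in V, N ∂μ := by
        refine lintegral_mono fun y => ?_
        calc ∑' i, (s i).indicator (1 : X → ℝ≥0∞) y = ∑' _ : {i | y ∈ s i}, (1 : ℝ≥0∞) :=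
              (tsum_subtype {i | y ∈ s i} fun _ => (1 : ℝ≥0∞)).symm
          _ ≤ N := by
              rw [ENNReal.tsum_set_one]
              exact_mod_cast hN y
    _ = N * μ V := by rw [setLIntegral_const]

/-- The Besicovitch property with a given multiplicity `N`. -/
def IsBesicovitchWith (X : Type*) [MetricSpace X] (N : ℕ) : Prop :=
  ∀ A : Set X, Bornology.IsBounded A → ∀ r : X → ℝ, (∀ x ∈ A, 0 < r x) →
    ∃ t : Set X, t ⊆ A ∧ t.Countable ∧ (A ⊆ ⋃ x ∈ t, Metric.ball x (r x)) ∧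
      ∀ y : X, ({x | x ∈ t ∧ y ∈ Metric.ball x (r x)}).Finite ∧
        Nat.card {x | x ∈ t ∧ y ∈ Metric.ball x (r x)} ≤ N

theorem IsBesicovitchWith.measure_le_of_forall_inter_ball_le {X : Type*} [MetricSpace X]
    [MeasurableSpace X] [OpensMeasurableSpace X] {μ : Measure X} {N : ℕ}
    (hN : IsBesicovitchWith X N) {E V : Set X} {ρ : X → ℝ} {K : ℝ≥0∞}
    (hE : Bornology.IsBounded E) (hρ : ∀ y ∈ E, 0 < ρ y)
    (hV : ∀ y ∈ E, Metric.ball y (ρ y) ⊆ V)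
    (hK : ∀ y ∈ E, μ (E ∩ Metric.ball y (ρ y)) ≤ K * μ (Metric.ball y (ρ y))) :
    μ E ≤ K * (N * μ V) := by
  obtain ⟨t, htE, htc, hcov, hmult⟩ := hN E hE ρ hρ
  have : Countable t := htc.to_subtype
  have hencard : ∀ x, {y : t | x ∈ Metric.ball (y : X) (ρ y)}.encard ≤ N := fun x => by
    rw [← Subtype.val_injective.encard_image]
    refine (Set.encard_le_encard ?_).trans
      (Set.encard_le_coe_iff_finite_ncard_le.2 (hmult x))
    rintro _ ⟨y, hy, rfl⟩
    exact ⟨y.2, hy⟩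
  calc μ E ≤ μ (⋃ y ∈ t, E ∩ Metric.ball y (ρ y)) := by
        rw [← Set.inter_iUnion₂, Set.inter_eq_left.2 hcov]
    _ ≤ ∑' y : t, μ (E ∩ Metric.ball (y : X) (ρ y)) := measure_biUnion_le μ htc _
    _ ≤ ∑' y : t, K * μ (Metric.ball (y : X) (ρ y)) :=
        ENNReal.tsum_le_tsum fun y => hK y (htE y.2)
    _ = K * ∑' y : t, μ (Metric.ball (y : X) (ρ y)) := ENNReal.tsum_mul_left
    _ ≤ K * (N * μ V) := by
        gcongr
        exact tsum_measure_le_of_encard_le (fun _ => Metric.isOpen_ball.measurableSet)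
          (fun y => hV y (htE y.2)) hencard

end Covering

section Federer

variable {X : Type*} [MetricSpace X] [MeasurableSpace X] {μ : Measure X}

/-- `μ` is `D`-Federer on `U`: tripling the radius of a ball centered on the support of `μ`
multiplies its measure by at most `D`, as long as the larger ball stays inside `U`. -/
def IsFedererOn (μ : Measure X) (D : ℝ≥0) (U : Set X) : Prop :=
  ∀ y ∈ measSupport μ, ∀ ρ : ℝ, 0 < ρ → Metric.ball y (3 * ρ) ⊆ U →
    μ (Metric.ball y (3 * ρ)) ≤ D * μ (Metric.ball y ρ)

variable {D : ℝ≥0} {U : Set X}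

theorem IsFedererOn.measure_ball_le_pow_mul (hμ : IsFedererOn μ D U) {y : X}
    (hy : y ∈ measSupport μ) {R : ℝ} (hR : 0 < R) (hU : Metric.ball y R ⊆ U) (j : ℕ) :
    μ (Metric.ball y R) ≤ D ^ j * μ (Metric.ball y (R / 3 ^ j)) := by
  induction j with
  | zero => simp
  | succ j ih =>
    have hstep : R / 3 ^ j = 3 * (R / 3 ^ (j + 1)) := by field
    have hle : R / 3 ^ j ≤ R := div_le_self hR.le (one_le_pow₀ (by norm_num))
    calc μ (Metric.ball y R) ≤ D ^ j * μ (Metric.ball y (3 * (R / 3 ^ (j + 1)))) := hstep ▸ ih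
      _ ≤ D ^ j * (D * μ (Metric.ball y (R / 3 ^ (j + 1)))) := by
          gcongr
          exact hμ y hy _ (by positivity) (hstep ▸ (Metric.ball_subset_ball hle).trans hU)
      _ = D ^ (j + 1) * μ (Metric.ball y (R / 3 ^ (j + 1))) := by ring

theorem IsFedererOn.measure_ball_lt_top [IsLocallyFiniteMeasure μ] (hμ : IsFedererOn μ D U)
    {y : X} (hy : y ∈ measSupport μ) {R : ℝ} (hU : Metric.ball y R ⊆ U) :
    μ (Metric.ball y R) < ∞ := by
  rcases le_or_gt R 0 with hR | hR
  · simp [Metric.ball_eq_empty.2 hR]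
  obtain ⟨V, hV, hVfin⟩ := μ.finiteAt_nhds y
  obtain ⟨ε, hε, hball⟩ := Metric.mem_nhds_iff.1 hV
  obtain ⟨j, hj⟩ := exists_pow_lt_of_lt_one (div_pos hε hR) (show (1 / 3 : ℝ) < 1 by norm_num)
  have hsmall : R / 3 ^ j ≤ ε := by
    rw [lt_div_iff₀ hR, one_div, inv_pow] at hj
    rw [div_eq_inv_mul]
    exact hj.le
  have hfin : μ (Metric.ball y (R / 3 ^ j)) < ∞ :=
    (measure_mono ((Metric.ball_subset_ball hsmall).trans hball)).trans_lt hVfin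
  refine (hμ.measure_ball_le_pow_mul hy hR hU j).trans_lt ?_
  finiteness

theorem IsFedererOn.measure_ball_three_mul_le (hμ : IsFedererOn μ D U) {y : X}
    (hy : y ∈ measSupport μ) {ρ ρ' : ℝ} (hρ : 0 < ρ) (hρ' : ρ' ≤ 3 * ρ) (hlt : ρ ≤ ρ')
    (hU : Metric.ball y (3 * ρ') ⊆ U) :
    μ (Metric.ball y (3 * ρ')) ≤ D ^ 2 * μ (Metric.ball y ρ) := by
  have hρ'0 : 0 < ρ' := hρ.trans_le hlt
  have hU' : Metric.ball y (3 * ρ) ⊆ U :=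
    (Metric.ball_subset_ball (by gcongr)).trans hU
  calc μ (Metric.ball y (3 * ρ')) ≤ D * μ (Metric.ball y ρ') := hμ y hy ρ' hρ'0 hU
    _ ≤ D * μ (Metric.ball y (3 * ρ)) := by gcongr
    _ ≤ D * (D * μ (Metric.ball y ρ)) := by gcongr; exact hμ y hy ρ hρ hU'
    _ = D ^ 2 * μ (Metric.ball y ρ) := by ring

end Federer

section Limits

theorem measure_setOf_eventually_mem_le_s6 {X : Type*} [MeasurableSpace X] {μ : Measure X}
    {A : ℕ → Set X} {K : ℝ≥0∞} (hA : ∀ i, μ (A i) ≤ K) :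
    μ {x | ∀ᶠ i in atTop, x ∈ A i} ≤ K := by
  have hunion : {x | ∀ᶠ i in atTop, x ∈ A i} = ⋃ m, ⋂ i ≥ m, A i := by
    ext x
    simp [eventually_atTop]
  have hmono : Monotone fun m => ⋂ i ≥ m, A i := fun m m' hm =>
    Set.biInter_subset_biInter_left fun i hi => hm.trans hi
  rw [hunion, hmono.measure_iUnion]
  exact iSup_le fun m => (measure_mono (Set.biInter_subset_of_mem le_rfl)).trans (hA m)

theorem eq_zero_of_forall_le_mul_rpow {a K : ℝ≥0∞} (hK : K ≠ ∞) {α : ℝ} (hα : 0 < α)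
    (h : ∀ τ : ℝ, 0 < τ → τ ≤ 1 → a ≤ K * ENNReal.ofReal (τ ^ α)) : a = 0 := by
  have hcont : ContinuousAt (fun τ : ℝ => K * ENNReal.ofReal (τ ^ α)) 0 :=
    (ENNReal.continuous_const_mul hK).continuousAt.comp <|
      ENNReal.continuous_ofReal.continuousAt.comp <| Real.continuousAt_rpow_const 0 α (.inr hα.le)
  have hlim : Tendsto (fun τ : ℝ => K * ENNReal.ofReal (τ ^ α)) (𝓝[>] 0) (𝓝 0) := by
    simpa [Real.zero_rpow hα.ne'] using hcont.tendsto.mono_left nhdsWithin_le_nhds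
  refine nonpos_iff_eq_zero.1 (ge_of_tendsto hlim ?_)
  filter_upwards [Ioc_mem_nhdsGT one_pos] with τ hτ using h τ hτ.1 hτ.2

end Limits

section Marked

variable {P : Type*} [PartialOrder P]

/-- The elements of `S` comparable to, but different from, `p`. -/
def comparableTo (S : Set P) (p : P) : Set P :=
  {q ∈ S | q ≠ p ∧ (q ≤ p ∨ p ≤ q)}

theorem comparableTo_subset (S : Set P) (p : P) : comparableTo S p ⊆ S := fun _ hq => hq.1

theorem chainHeight_comparableTo_add_one_le {S : Set P} {p : P} (hp : p ∈ S) :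
    (comparableTo S p).chainHeight (· ≤ ·) + 1 ≤ S.chainHeight (· ≤ ·) := by
  refine ENat.forall_natCast_le_iff_le.1 fun k hk => ?_
  obtain - | k := k
  · simp
  obtain ⟨F, hFS, hcard, hchain⟩ := Set.exists_isChain_of_le_chainHeight k
    (WithTop.le_of_add_le_add_right ENat.one_ne_top (by exact_mod_cast hk))
  have hpF : p ∉ F := fun h => (hFS h).2.1 rfl
  calc ((k + 1 : ℕ) : ℕ∞) = (insert p F).encard := by
        rw [Set.encard_insert_of_notMem hpF, hcard, Nat.cast_add_one]
    _ ≤ S.chainHeight (· ≤ ·) := Set.encard_le_chainHeight_of_isChain _ _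
        (Set.insert_subset hp (hFS.trans (comparableTo_subset S p)))
        (hchain.insert fun q hq _ => (hFS hq).2.2.symm)

theorem chainHeight_comparableTo_le {S : Set P} {p : P} (hp : p ∈ S) {j : ℕ}
    (hS : S.chainHeight (· ≤ ·) ≤ (j + 1 : ℕ)) :
    (comparableTo S p).chainHeight (· ≤ ·) ≤ j :=
  WithTop.le_of_add_le_add_right ENat.one_ne_top
    ((chainHeight_comparableTo_add_one_le hp).trans hS)

/-- A weight function `φ` on `P` is marked, relative to the thresholds `η` and the ratio `τ`, if
`S` contains a chain on which `φ ≤ η` and such that `τ * η ≤ φ` at every element of `S` comparable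
with the whole chain. This is the pointwise content of the marked points of Kleinbock, Lindenstrauss
and Weiss, in the form in which it passes from `comparableTo S p` to `S`. -/
def IsMarked (φ η : P → ℝ) (τ : ℝ) (S : Set P) : Prop :=
  ∃ F ⊆ S, IsChain (· ≤ ·) F ∧ (∀ p ∈ F, φ p ≤ η p) ∧
    ∀ p ∈ S, (∀ q ∈ F, p ≤ q ∨ q ≤ p) → τ * η p ≤ φ p

variable {φ η : P → ℝ} {τ : ℝ} {S : Set P}

theorem isMarked_of_forall_le (h : ∀ p ∈ S, τ * η p ≤ φ p) : IsMarked φ η τ S :=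
  ⟨∅, S.empty_subset, IsChain.empty, by simp, fun p hp _ => h p hp⟩

theorem IsMarked.of_comparableTo {p : P} (h : IsMarked φ η τ (comparableTo S p)) (hp : p ∈ S)
    (hlow : τ * η p ≤ φ p) (hupp : φ p ≤ η p) : IsMarked φ η τ S := by
  obtain ⟨F, hFS, hchain, hF, hext⟩ := h
  refine ⟨insert p F, Set.insert_subset hp (hFS.trans (comparableTo_subset S p)),
    hchain.insert fun q hq _ => (hFS hq).2.2.symm, Set.forall_mem_insert.2 ⟨hupp, hF⟩,
    fun q hq hcomp => ?_⟩
  rw [Set.forall_mem_insert] at hcomp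
  obtain rfl | hqp := eq_or_ne q p
  · exact hlow
  · exact hext q ⟨hq, hqp, hcomp.1⟩ hcomp.2

theorem exists_eventually_lt_of_not_isMarked {X : Type*} [TopologicalSpace X] {ψ : P → X → ℝ}
    {y : X} (hcont : ∀ p ∈ S, ContinuousAt (ψ p) y) (hη : ∀ p, 0 ≤ η p) (hτ : τ ≤ 1)
    (hy : ¬ IsMarked (ψ · y) η τ S) : ∃ p ∈ S, ∀ᶠ x in 𝓝 y, ψ p x < η p := by
  contrapose! hy
  refine isMarked_of_forall_le fun p hp => (mul_le_of_le_one_left (hη p) hτ).trans ?_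
  by_contra! hlt
  exact hy p hp (((hcont p hp).eventually_lt_const hlt).mono fun _ => not_le.2)

end Marked

section CriticalRadius

theorem exists_mem_exists_notMem_le_three_mul {R : Set ℝ} (hR : R.Nonempty)
    (hpos : ∀ ρ ∈ R, 0 < ρ) {b c : ℝ} (hb : b ∈ upperBounds R) (hbc : b < c) :
    ∃ ρ ∈ R, ∃ ρ' ∉ R, ρ < ρ' ∧ ρ' ≤ 3 * ρ ∧ ρ' < c := by
  obtain ⟨ρ₁, hρ₁⟩ := hR
  have hbdd : BddAbove R := ⟨b, hb⟩
  have hsup_pos : 0 < sSup R := (hpos ρ₁ hρ₁).trans_le (le_csSup hbdd hρ₁)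
  have hsup_lt : sSup R < c := (csSup_le ⟨ρ₁, hρ₁⟩ hb).trans_lt hbc
  obtain ⟨ρ, hρR, hρ⟩ := exists_lt_of_lt_csSup ⟨ρ₁, hρ₁⟩ (half_lt_self hsup_pos)
  obtain ⟨ρ', hlt, hρ'⟩ :=
    exists_between (lt_min hsup_lt (show sSup R < 3 / 2 * sSup R by linarith))
  rw [lt_min_iff] at hρ'
  exact ⟨ρ, hρR, ρ', fun h => hlt.not_ge (le_csSup hbdd h), (le_csSup hbdd hρR).trans_lt hlt,
    by linarith, hρ'.1⟩

theorem exists_critical_radius {X P : Type*} [PseudoMetricSpace X] {Y : Set X} {S : Set P}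
    {ψ : P → X → ℝ} {η : P → ℝ} {x₀ y : X} {s : ℝ} (hy : y ∈ Metric.ball x₀ s)
    (hreach : ∀ p ∈ S, ∃ x ∈ Metric.ball x₀ s ∩ Y, η p ≤ ψ p x)
    (hlt : ∃ p ∈ S, ∀ᶠ x in 𝓝 y, ψ p x < η p) :
    ∃ p ∈ S, ∃ ρ ρ' : ℝ, 0 < ρ ∧ ρ < ρ' ∧ ρ' ≤ 3 * ρ ∧ ρ' < 2 * s ∧
      (∀ x ∈ Metric.ball y ρ ∩ Y, ψ p x < η p) ∧
      ∀ q ∈ S, ∃ x ∈ Metric.ball y ρ' ∩ Y, η q ≤ ψ q x := by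
  rw [Metric.mem_ball] at hy
  let R : Set ℝ := {ρ | 0 < ρ ∧ ∃ p ∈ S, ∀ x ∈ Metric.ball y ρ ∩ Y, ψ p x < η p}
  have hRne : R.Nonempty := by
    obtain ⟨p, hp, hev⟩ := hlt
    obtain ⟨δ, hδ, hball⟩ := Metric.eventually_nhds_iff_ball.1 hev
    exact ⟨δ, hδ, p, hp, fun x hx => hball x hx.1⟩
  have hRub : s + dist y x₀ ∈ upperBounds R := by
    rintro ρ ⟨-, p, hp, hsmall⟩
    by_contra! hρ
    obtain ⟨x, ⟨hxB, hxY⟩, hx⟩ := hreach p hp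
    have hxy : x ∈ Metric.ball y ρ := by
      rw [Metric.mem_ball] at hxB ⊢
      linarith [dist_triangle_right x y x₀]
    exact (hsmall x ⟨hxy, hxY⟩).not_ge hx
  obtain ⟨ρ, ⟨hρ, p, hp, hsmall⟩, ρ', hρ'R, hρρ', hρ'3, hρ's⟩ :=
    exists_mem_exists_notMem_le_three_mul hRne (fun ρ hρ => hρ.1) hRub
      (show s + dist y x₀ < 2 * s by linarith)
  refine ⟨p, hp, ρ, ρ', hρ, hρρ', hρ'3, hρ's, hsmall, fun q hq => ?_⟩
  by_contra! hq'
  exact hρ'R ⟨hρ.trans hρρ', q, hq, hq'⟩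

theorem ball_subset_ball_pow_mul {X : Type*} [PseudoMetricSpace X] (x : X) {s : ℝ} (hs : 0 ≤ s)
    (j : ℕ) : Metric.ball x s ⊆ Metric.ball x (3 ^ j * s) :=
  Metric.ball_subset_ball (le_mul_of_one_le_left hs (one_le_pow₀ (by norm_num)))

theorem ball_pow_mul_subset_ball_pow_mul {X : Type*} [PseudoMetricSpace X] {x₀ y : X} {s ρ : ℝ}
    (hy : y ∈ Metric.ball x₀ s) (hρ : ρ ≤ 2 * s) (j : ℕ) :
    Metric.ball y (3 ^ j * ρ) ⊆ Metric.ball x₀ (3 ^ (j + 1) * s) := by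
  refine Metric.ball_subset_ball' ?_
  have hs : 0 < s := Metric.pos_of_mem_ball hy
  calc 3 ^ j * ρ + dist y x₀ ≤ 3 ^ j * (2 * s) + 3 ^ j * s :=
        add_le_add (by gcongr) <| (Metric.mem_ball.1 hy).le.trans <|
          le_mul_of_one_le_left hs.le (one_le_pow₀ (by norm_num))
    _ = 3 ^ (j + 1) * s := by ring

end CriticalRadius

section Nondivergence

variable {X : Type*} [MetricSpace X] [MeasurableSpace X] {μ : Measure X} {C α : ℝ} {U : Set X}

theorem IsCAGoodOn.measure_lt_le {F : X → ℝ} (hF : IsCAGoodOn μ C α F U) (hα : 0 ≤ α) {z : X}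
    (hz : z ∈ measSupport μ) {ρ : ℝ} (hρ : 0 < ρ) (hU : Metric.ball z ρ ⊆ U) {η τ : ℝ}
    (hη : 0 < η) (hτ : 0 < τ) (hreach : ∃ x ∈ Metric.ball z ρ ∩ measSupport μ, η ≤ |F x|) :
    μ {x ∈ Metric.ball z ρ | |F x| < τ * η} ≤
      ENNReal.ofReal C * ENNReal.ofReal (τ ^ α) * μ (Metric.ball z ρ) := by
  set A := (fun x => |F x|) '' (Metric.ball z ρ ∩ measSupport μ)
  have hsup : 0 ≤ sSup A := Real.sSup_nonneg (by rintro _ ⟨x, -, rfl⟩; exact abs_nonneg _)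
  have hratio : τ * η / sSup A ≤ τ := by
    by_cases hA : BddAbove A
    · obtain ⟨x, hx, hFx⟩ := hreach
      have hηA : η ≤ sSup A := hFx.trans (le_csSup hA ⟨x, hx, rfl⟩)
      rw [div_le_iff₀ (hη.trans_le hηA)]
      gcongr
    · rw [Real.sSup_of_not_bddAbove hA, div_zero]
      exact hτ.le
  refine (hF z hz ρ hρ hU (τ * η) (by positivity)).trans ?_
  rw [ENNReal.ofReal_mul' (by positivity)]
  gcongr

/-- The constant in the nondivergence estimate `measure_not_isMarked_le` for a poset all of whose
chains have length at most `j`. -/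
def nondivConst (N : ℕ) (D C : ℝ≥0) : ℕ → ℝ≥0
  | 0 => 0
  | j + 1 => N * (D ^ 2 * (nondivConst N D C j + C))

variable {P : Type*} [PartialOrder P] {D : ℝ≥0} {ψ : P → X → ℝ} {η : P → ℝ} {τ : ℝ} {S : Set P}

theorem measure_not_isMarked_ball_le (hμ : IsFedererOn μ D U) (hα : 0 ≤ α) (hη : ∀ p, 0 < η p)
    (hψ : ∀ p x, 0 ≤ ψ p x) (hτ : 0 < τ) {p : P} (hp : p ∈ S) (hgood : IsCAGoodOn μ C α (ψ p) U)
    {y : X} (hy : y ∈ measSupport μ) {ρ ρ' : ℝ} (hρ : 0 < ρ) (hρρ' : ρ ≤ ρ') (hρ' : ρ' ≤ 3 * ρ)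
    (hU : Metric.ball y (3 * ρ') ⊆ U)
    (hupp : ∀ x ∈ Metric.ball y ρ ∩ measSupport μ, ψ p x ≤ η p)
    (hreach : ∃ x ∈ Metric.ball y ρ' ∩ measSupport μ, η p ≤ ψ p x) {K : ℝ≥0∞}
    (hK : μ {x ∈ Metric.ball y ρ' ∩ measSupport μ | ¬ IsMarked (ψ · x) η τ (comparableTo S p)} ≤
      K * ENNReal.ofReal (τ ^ α) * μ (Metric.ball y (3 * ρ'))) :
    μ {x ∈ Metric.ball y ρ ∩ measSupport μ | ¬ IsMarked (ψ · x) η τ S} ≤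
      D ^ 2 * (K + ENNReal.ofReal C) * ENNReal.ofReal (τ ^ α) * μ (Metric.ball y ρ) := by
  have hρ'0 : 0 < ρ' := hρ.trans_le hρρ'
  have htriple : Metric.ball y ρ' ⊆ Metric.ball y (3 * ρ') :=
    Metric.ball_subset_ball (by linarith)
  have hsmall : μ {x ∈ Metric.ball y ρ' | |ψ p x| < τ * η p} ≤
      ENNReal.ofReal C * ENNReal.ofReal (τ ^ α) * μ (Metric.ball y (3 * ρ')) := by
    have hreach_abs : ∃ x ∈ Metric.ball y ρ' ∩ measSupport μ, η p ≤ |ψ p x| := by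
      simpa only [abs_of_nonneg (hψ p _)] using hreach
    refine (hgood.measure_lt_le hα hy hρ'0 (htriple.trans hU) (hη p) hτ hreach_abs).trans ?_
    gcongr
  have hcover : {x ∈ Metric.ball y ρ ∩ measSupport μ | ¬ IsMarked (ψ · x) η τ S} ⊆
      {x ∈ Metric.ball y ρ' ∩ measSupport μ | ¬ IsMarked (ψ · x) η τ (comparableTo S p)} ∪
        {x ∈ Metric.ball y ρ' | |ψ p x| < τ * η p} := by
    rintro x ⟨hx, hxS⟩
    have hx' := Metric.ball_subset_ball hρρ' hx.1
    by_cases hlow : |ψ p x| < τ * η p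
    · exact .inr ⟨hx', hlow⟩
    · rw [abs_of_nonneg (hψ p x), not_lt] at hlow
      exact .inl ⟨⟨hx', hx.2⟩, fun h => hxS (h.of_comparableTo hp hlow (hupp x hx))⟩
  calc μ {x ∈ Metric.ball y ρ ∩ measSupport μ | ¬ IsMarked (ψ · x) η τ S}
      ≤ K * ENNReal.ofReal (τ ^ α) * μ (Metric.ball y (3 * ρ')) +
          ENNReal.ofReal C * ENNReal.ofReal (τ ^ α) * μ (Metric.ball y (3 * ρ')) :=
        (measure_mono hcover).trans <| (measure_union_le _ _).trans (add_le_add hK hsmall)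
    _ = (K + ENNReal.ofReal C) * ENNReal.ofReal (τ ^ α) * μ (Metric.ball y (3 * ρ')) := by ring
    _ ≤ (K + ENNReal.ofReal C) * ENNReal.ofReal (τ ^ α) * (D ^ 2 * μ (Metric.ball y ρ)) := by
        gcongr
        exact hμ.measure_ball_three_mul_le hy hρ hρ' hρρ' hU
    _ = D ^ 2 * (K + ENNReal.ofReal C) * ENNReal.ofReal (τ ^ α) * μ (Metric.ball y ρ) := by ring

theorem measure_not_isMarked_le [OpensMeasurableSpace X] {N : ℕ} (hN : IsBesicovitchWith X N)
    (hμ : IsFedererOn μ D U) (hα : 0 ≤ α) (hη : ∀ p, 0 < η p) (hψ : ∀ p x, 0 ≤ ψ p x)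
    (hτ : 0 < τ) (hτ1 : τ ≤ 1) {j : ℕ} (hS : S.chainHeight (· ≤ ·) ≤ j)
    (hgood : ∀ p ∈ S, IsCAGoodOn μ C α (ψ p) U) (hcont : ∀ p ∈ S, ContinuousOn (ψ p) U)
    {x₀ : X} {s : ℝ} (hU : Metric.ball x₀ (3 ^ (j + 1) * s) ⊆ U)
    (hreach : ∀ p ∈ S, ∃ x ∈ Metric.ball x₀ s ∩ measSupport μ, η p ≤ ψ p x) :
    μ {x ∈ Metric.ball x₀ s ∩ measSupport μ | ¬ IsMarked (ψ · x) η τ S} ≤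
      nondivConst N D C.toNNReal j * ENNReal.ofReal (τ ^ α) * μ (Metric.ball x₀ (3 * s)) := by
  induction j generalizing S x₀ s with
  | zero =>
    obtain rfl := (Set.chainHeight_eq_zero_iff _ _).1 (nonpos_iff_eq_zero.1 hS)
    simp [isMarked_of_forall_le]
  | succ j ih =>
    set E := {x ∈ Metric.ball x₀ s ∩ measSupport μ | ¬ IsMarked (ψ · x) η τ S}
    have hlt : ∀ y ∈ E, ∃ p ∈ S, ∀ᶠ x in 𝓝 y, ψ p x < η p := by
      rintro y ⟨⟨hyB, -⟩, hym⟩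
      have hyU : U ∈ 𝓝 y := mem_of_superset (Metric.isOpen_ball.mem_nhds hyB)
        ((ball_subset_ball_pow_mul x₀ (Metric.pos_of_mem_ball hyB).le _).trans hU)
      exact exists_eventually_lt_of_not_isMarked (fun p hp => (hcont p hp).continuousAt hyU)
        (fun p => (hη p).le) hτ1 hym
    choose! p hpS ρ ρ' hρ hρρ' hρ'3 hρ's hupp hreach' using fun y (hy : y ∈ E) =>
      exists_critical_radius hy.1.1 hreach (hlt y hy)
    have hlocal : ∀ y ∈ E, μ (E ∩ Metric.ball y (ρ y)) ≤
        D ^ 2 * (nondivConst N D C.toNNReal j + ENNReal.ofReal C) * ENNReal.ofReal (τ ^ α) *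
          μ (Metric.ball y (ρ y)) := by
      intro y hy
      have hyU : Metric.ball y (3 ^ (j + 1) * ρ' y) ⊆ U :=
        (ball_pow_mul_subset_ball_pow_mul hy.1.1 (hρ's y hy).le (j + 1)).trans hU
      have hyU' : Metric.ball y (3 * ρ' y) ⊆ U := by
        have := (hρ y hy).trans (hρρ' y hy)
        refine (ball_subset_ball_pow_mul y (by positivity) j).trans ?_
        rwa [← mul_assoc, ← pow_succ]
      have hind := ih (chainHeight_comparableTo_le (hpS y hy) hS) (fun q hq => hgood q hq.1)
        (fun q hq => hcont q hq.1) hyU fun q hq => hreach' y hy q hq.1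
      refine (measure_mono ?_).trans <| measure_not_isMarked_ball_le hμ hα hη hψ hτ (hpS y hy)
        (hgood _ (hpS y hy)) hy.1.2 (hρ y hy) (hρρ' y hy).le (hρ'3 y hy) hyU'
        (fun x hx => (hupp y hy x hx).le) (hreach' y hy _ (hpS y hy)) hind
      exact fun x hx => ⟨⟨hx.2, hx.1.1.2⟩, hx.1.2⟩
    calc μ E ≤ D ^ 2 * (nondivConst N D C.toNNReal j + ENNReal.ofReal C) *
          ENNReal.ofReal (τ ^ α) * (N * μ (Metric.ball x₀ (3 * s))) := by
          refine hN.measure_le_of_forall_inter_ball_le (Metric.isBounded_ball.subset fun x hx =>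
            hx.1.1) hρ (fun y hy => Metric.ball_subset_ball' ?_) hlocal
          linarith [hρρ' y hy, hρ's y hy, Metric.mem_ball.1 hy.1.1]
      _ = _ := by
          simp only [nondivConst, ENNReal.ofReal]
          push_cast
          ring

end Nondivergence

section Chains

theorem exists_notMem_sup_span_comparable_of_isChain {R M : Type*} [Ring R] [AddCommGroup M]
    [Module R M] [WellFoundedGT (Submodule R M)] {F : Set (Submodule R M)}
    (hF : IsChain (· ≤ ·) F) {v : M} (hv : v ≠ 0) :
    ∃ W ∈ insert ⊥ F, v ∉ W ∧ ∀ V ∈ F, W ⊔ R ∙ v ≤ V ∨ V ≤ W ⊔ R ∙ v := by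
  have hchain : IsChain (· ≤ ·) (insert ⊥ F) := hF.insert fun _ _ _ => .inl bot_le
  obtain ⟨W, ⟨hW, hvW⟩, hmax⟩ := wellFounded_gt.has_min
    {W ∈ (insert ⊥ F : Set (Submodule R M)) | v ∉ W} ⟨⊥, Set.mem_insert _ _, by simpa using hv⟩
  refine ⟨W, hW, hvW, fun V hV => ?_⟩
  have hVF : V ∈ (insert ⊥ F : Set (Submodule R M)) := Set.mem_insert_of_mem _ hV
  by_cases hvV : v ∈ V
  · refine .inl (sup_le ?_ ((Submodule.span_singleton_le_iff_mem _ _).2 hvV))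
    exact (hchain.total hW hVF).resolve_right fun h => hvW (h hvV)
  · refine .inr (le_trans ?_ le_sup_left)
    exact (hchain.total hVF hW).elim id fun h => (eq_of_le_of_not_lt h (hmax V ⟨hVF, hvV⟩)).ge

theorem chainHeight_Ioo_bot_top_le {K V : Type*} [DivisionRing K] [AddCommGroup V]
    [Module K V] [FiniteDimensional K V] :
    (Set.Ioo (⊥ : Submodule K V) ⊤).chainHeight (· ≤ ·) ≤ (Module.finrank K V - 1 : ℕ) := by
  refine iSup_le fun ⟨F, hF, hchain⟩ => ?_
  have hmaps : Set.MapsTo (fun W : Submodule K V => Module.finrank K W) F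
      (Set.Ioo 0 (Module.finrank K V)) := fun W hW =>
    ⟨Nat.pos_of_ne_zero (Submodule.finrank_eq_zero.not.2 (hF hW).1.ne'),
      Submodule.finrank_lt (hF hW).2.ne⟩
  have hinj : Set.InjOn (fun W : Submodule K V => Module.finrank K W) F := fun W hW W' hW' h =>
    (hchain.total hW hW').elim (Submodule.eq_of_le_of_finrank_eq · h)
      fun hle => (Submodule.eq_of_le_of_finrank_eq hle h.symm).symm
  refine (Set.encard_le_encard_of_injOn hmaps hinj).trans ?_
  rw [← Finset.coe_Ioo, Set.encard_coe_eq_coe_finsetCard, Nat.card_Ioo, Nat.sub_zero]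

end Chains

section LatticePoints

theorem linearIndependent_int_cons_iff (K : Type*) [Field K] [CharZero K] {m r : ℕ}
    {q : Fin m → ℤ} {v : Fin r → Fin m → ℤ} :
    LinearIndependent ℤ (Fin.cons q v : Fin (r + 1) → Fin m → ℤ) ↔
      LinearIndependent ℤ v ∧
        (fun i => (q i : K)) ∉ Submodule.span K (Set.range fun a i => (v a i : K)) := by
  have hcast {s : ℕ} (u : Fin s → Fin m → ℤ) :
      LinearIndependent K (fun a i => (u a i : K)) ↔ LinearIndependent ℤ u := by
    simpa [Function.comp_def] using linearIndependent_algebraMap_comp_iff (R := ℤ) (S := K) (v := u)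
  rw [← hcast, ← hcast, ← linearIndependent_finCons]
  congr! 1
  funext a
  cases a using Fin.cases <;> rfl

/-- The inclusion `ℤ^m ⊆ ℚ^m`. -/
def intToRat (m : ℕ) : (Fin m → ℤ) →ₗ[ℤ] (Fin m → ℚ) :=
  (Algebra.linearMap ℤ ℚ).compLeft (Fin m)

theorem intToRat_injective (m : ℕ) : Function.Injective (intToRat m) :=
  Int.cast_injective.comp_left

/-- The primitive subgroup `W ∩ ℤ^m` of `ℤ^m` attached to a rational subspace `W`. Every primitive
subgroup arises in this way, so that subspaces of `ℚ^m` parametrize primitive subgroups. -/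
def latticePoints {m : ℕ} (W : Submodule ℚ (Fin m → ℚ)) : Submodule ℤ (Fin m → ℤ) :=
  (W.restrictScalars ℤ).comap (intToRat m)

/-- A `ℤ`-basis of the lattice points of a rational subspace. -/
noncomputable def intBasis {m : ℕ} (W : Submodule ℚ (Fin m → ℚ)) :
    Fin (Module.finrank ℤ (latticePoints W)) → Fin m → ℤ :=
  fun a => Module.finBasis ℤ (latticePoints W) a

variable {m : ℕ} (W : Submodule ℚ (Fin m → ℚ))

theorem linearIndependent_intBasis : LinearIndependent ℤ (intBasis W) :=
  (Module.finBasis ℤ (latticePoints W)).linearIndependent.map' (latticePoints W).subtype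
    (Submodule.ker_subtype _)

theorem span_range_intBasis : Submodule.span ℤ (Set.range (intBasis W)) = latticePoints W := by
  have hrange : Set.range (intBasis W) =
      (latticePoints W).subtype '' Set.range (Module.finBasis ℤ (latticePoints W)) :=
    Set.range_comp _ _
  rw [hrange, ← Submodule.map_span, Module.Basis.span_eq, Submodule.map_subtype_top]

theorem intToRat_intBasis_mem (a : Fin (Module.finrank ℤ (latticePoints W))) :
    intToRat m (intBasis W a) ∈ W :=
  (Module.finBasis ℤ (latticePoints W) a).2

theorem exists_smul_eq_intToRat (x : Fin m → ℚ) :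
    ∃ d : ℤ, d ≠ 0 ∧ ∃ w, (d : ℚ) • x = intToRat m w := by
  obtain ⟨d, hd⟩ := IsLocalization.exist_integer_multiples_of_finite (nonZeroDivisors ℤ) x
  choose w hw using hd
  refine ⟨d, nonZeroDivisors.coe_ne_zero d, w, funext fun i => ?_⟩
  simpa [intToRat, Submonoid.smul_def] using (hw i).symm

theorem span_range_intToRat_intBasis :
    Submodule.span ℚ (Set.range (intToRat m ∘ intBasis W)) = W := by
  have hmap : Submodule.span ℤ (Set.range (intToRat m ∘ intBasis W)) =
      (latticePoints W).map (intToRat m) := by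
    rw [Set.range_comp, ← Submodule.map_span, span_range_intBasis]
  rw [← Submodule.span_span_of_tower ℤ ℚ, hmap]
  refine le_antisymm (Submodule.span_le.2 ?_) fun x hx => ?_
  · rintro _ ⟨w, hw, rfl⟩
    exact hw
  · obtain ⟨d, hd, w, hw⟩ := exists_smul_eq_intToRat x
    have hd' : (d : ℚ) ≠ 0 := Int.cast_ne_zero.2 hd
    rw [← Submodule.smul_mem_iff _ hd', hw]
    refine Submodule.subset_span ⟨w, ?_, rfl⟩
    change intToRat m w ∈ W
    exact hw ▸ W.smul_mem _ hx

theorem finrank_latticePoints : Module.finrank ℤ (latticePoints W) = Module.finrank ℚ W := by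
  have hind : LinearIndependent ℚ (intToRat m ∘ intBasis W) :=
    (linearIndependent_algebraMap_comp_iff (R := ℤ) (S := ℚ) (v := intBasis W)).2
      (linearIndependent_intBasis W)
  rw [← Fintype.card_fin (Module.finrank ℤ _), ← finrank_span_eq_card hind,
    span_range_intToRat_intBasis]

variable {W}

theorem linearIndependent_cons_intBasis {q : Fin m → ℤ} (hq : intToRat m q ∉ W) :
    LinearIndependent ℤ (Fin.cons q (intBasis W) : Fin (_ + 1) → Fin m → ℤ) :=
  (linearIndependent_int_cons_iff ℚ).2
    ⟨linearIndependent_intBasis W, (span_range_intToRat_intBasis W).symm ▸ hq⟩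

theorem isPrimitiveBasis_intBasis : IsPrimitiveBasis (intBasis W) := by
  refine ⟨linearIndependent_intBasis W, fun w hw => ?_⟩
  rw [span_range_intBasis]
  by_contra hnot
  exact ((linearIndependent_int_cons_iff ℝ).1 (linearIndependent_cons_intBasis hnot)).2 hw

end LatticePoints

section Covolume

theorem det_ne_zero_of_linearIndependent {R M ι : Type*} [CommRing R] [IsDomain R]
    [AddCommGroup M] [Module R M] [Fintype ι] [DecidableEq ι] {u w : ι → M}
    (hu : LinearIndependent R u) {A : Matrix ι ι R} (hA : ∀ b, u b = ∑ c, A c b • w c) :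
    A.det ≠ 0 := by
  intro hdet
  obtain ⟨x, hx0, hx⟩ := Matrix.exists_mulVec_eq_zero_iff.2 hdet
  refine hx0 (funext (Fintype.linearIndependent_iff.1 hu x ?_))
  calc ∑ b, x b • u b = ∑ c, (A.mulVec x) c • w c := by
        simp only [hA, Finset.smul_sum, smul_smul, Matrix.mulVec, dotProduct, Finset.sum_smul,
          mul_comm]
        exact Finset.sum_comm
    _ = 0 := by simp [hx]

/-- The real `m × r` matrix whose columns are the integer vectors `v₁, …, v_r`. -/
def columnMatrix {m r : ℕ} (v : Fin r → Fin m → ℤ) : Matrix (Fin m) (Fin r) ℝ :=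
  Matrix.of fun i b => (v b i : ℝ)

variable {m r r' : ℕ} (h : Matrix (Fin m) (Fin m) ℝ)

theorem covFam_eq_iSup_abs_det_submatrix (v : Fin r → Fin m → ℤ) :
    covFam h v = ⨆ φ : Fin r → Fin m,
      |((h * columnMatrix v).submatrix φ id).det| :=
  rfl

theorem abs_det_submatrix_le_covFam (v : Fin r → Fin m → ℤ) (φ : Fin r → Fin m) :
    |((h * columnMatrix v).submatrix φ id).det| ≤ covFam h v :=
  le_ciSup (f := fun φ : Fin r → Fin m =>
    |((h * columnMatrix v).submatrix φ id).det|) (Set.finite_range _).bddAbove φ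

theorem covFam_nonneg (v : Fin r → Fin m → ℤ) : 0 ≤ covFam h v :=
  Real.iSup_nonneg fun _ => abs_nonneg _

theorem covFam_of_rank_eq_zero (hr : r = 0) (v : Fin r → Fin m → ℤ) : covFam h v = 1 := by
  subst hr
  simp [covFam]

theorem continuous_covFam (v : Fin r → Fin m → ℤ) :
    Continuous fun h : Matrix (Fin m) (Fin m) ℝ => covFam h v := by
  rcases isEmpty_or_nonempty (Fin r → Fin m) with hempty | hne
  · simpa only [covFam, Real.iSup_of_isEmpty] using continuous_const
  · simp only [covFam_eq_iSup_abs_det_submatrix, ← Finset.sup'_univ_eq_ciSup]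
    refine Continuous.finset_sup'_apply _ fun φ _ => ?_
    fun_prop

theorem covFam_le_covFam_of_forall_mem_span (hr : r = r') {u : Fin r → Fin m → ℤ}
    {w : Fin r' → Fin m → ℤ} (hu : LinearIndependent ℤ u)
    (huw : ∀ b, u b ∈ Submodule.span ℤ (Set.range w)) : covFam h w ≤ covFam h u := by
  subst hr
  choose A hA using fun b => Submodule.mem_span_range_iff_exists_fun ℤ |>.1 (huw b)
  set T : Matrix (Fin r) (Fin r) ℤ := (Matrix.of A)ᵀ
  have hdet : (1 : ℝ) ≤ |(T.map (Int.cast : ℤ → ℝ)).det| := by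
    rw [← Int.cast_det]
    exact_mod_cast Int.one_le_abs (det_ne_zero_of_linearIndependent hu fun b => (hA b).symm)
  have hmul : columnMatrix u = columnMatrix w * T.map (Int.cast : ℤ → ℝ) := by
    ext i b
    simp [columnMatrix, T, ← hA, Matrix.mul_apply, mul_comm]
  refine Real.iSup_le (fun φ => ?_) (covFam_nonneg h u)
  calc |((h * columnMatrix w).submatrix φ id).det|
      ≤ |((h * columnMatrix u).submatrix φ id).det| := by
        rw [hmul, ← Matrix.mul_assoc, Matrix.submatrix_mul _ (T.map _) φ id id
          Function.bijective_id, Matrix.submatrix_id_id, Matrix.det_mul, abs_mul]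
        exact le_mul_of_one_le_right (abs_nonneg _) hdet
    _ ≤ covFam h u := abs_det_submatrix_le_covFam h u φ

theorem abs_det_le_covFam (hr : r = m) {v : Fin r → Fin m → ℤ} (hv : LinearIndependent ℤ v) :
    |h.det| ≤ covFam h v := by
  have hone : columnMatrix (Pi.basisFun ℤ (Fin m)) = 1 := by
    ext a b
    simp [columnMatrix, Matrix.one_apply, Pi.single_apply]
  calc |h.det| = |((h * columnMatrix (Pi.basisFun ℤ (Fin m))).submatrix id id).det| := by
        rw [hone, Matrix.mul_one, Matrix.submatrix_id_id]
    _ ≤ covFam h (Pi.basisFun ℤ (Fin m)) := abs_det_submatrix_le_covFam h _ id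
    _ ≤ covFam h v := covFam_le_covFam_of_forall_mem_span h hr hv fun b =>
        (Pi.basisFun ℤ (Fin m)).mem_span (v b)

theorem covFam_cons_le (q : Fin m → ℤ) (v : Fin r → Fin m → ℤ) :
    covFam h (Fin.cons q v : Fin (r + 1) → Fin m → ℤ) ≤
      (r + 1) * ‖h *ᵥ fun i => (q i : ℝ)‖ * covFam h v := by
  have hcov := covFam_nonneg h v
  refine Real.iSup_le (fun φ => ?_) (by positivity)
  rw [Matrix.det_succ_column_zero]
  calc _ ≤ ∑ _ : Fin (r + 1), ‖h *ᵥ fun i => (q i : ℝ)‖ * covFam h v := by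
        refine (Finset.abs_sum_le_sum_abs _ _).trans (Finset.sum_le_sum fun a _ => ?_)
        rw [abs_mul, abs_mul, abs_pow, abs_neg, abs_one, one_pow, one_mul]
        gcongr
        · exact norm_le_pi_norm (h *ᵥ fun i => (q i : ℝ)) (φ a)
        · exact abs_det_submatrix_le_covFam h v (φ ∘ a.succAbove)
    _ = (r + 1) * ‖h *ᵥ fun i => (q i : ℝ)‖ * covFam h v := by simp; ring

/-- The covolume of `h (W ∩ ℤ^m)` for a rational subspace `W`. -/
noncomputable def subspaceCov (W : Submodule ℚ (Fin m → ℚ)) : ℝ :=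
  covFam h (intBasis W)

theorem subspaceCov_nonneg (W : Submodule ℚ (Fin m → ℚ)) : 0 ≤ subspaceCov h W :=
  covFam_nonneg h _

theorem subspaceCov_bot : subspaceCov h ⊥ = 1 :=
  covFam_of_rank_eq_zero h (by rw [finrank_latticePoints, finrank_bot]) _

theorem abs_det_le_subspaceCov_top : |h.det| ≤ subspaceCov h ⊤ :=
  abs_det_le_covFam h (by simp [finrank_latticePoints]) (linearIndependent_intBasis ⊤)

theorem subspaceCov_sup_span_le {W : Submodule ℚ (Fin m → ℚ)} {q : Fin m → ℤ}
    (hq : intToRat m q ∉ W) :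
    subspaceCov h (W ⊔ ℚ ∙ intToRat m q) ≤
      (Module.finrank ℚ W + 1) * ‖h *ᵥ fun i => (q i : ℝ)‖ * subspaceCov h W := by
  have hrank : Module.finrank ℤ (latticePoints W) + 1 =
      Module.finrank ℤ (latticePoints (W ⊔ ℚ ∙ intToRat m q)) := by
    rw [finrank_latticePoints, finrank_latticePoints, Submodule.finrank_sup_span_singleton hq]
  rw [← finrank_latticePoints]
  refine (covFam_le_covFam_of_forall_mem_span h hrank (linearIndependent_cons_intBasis hq)
    fun b => ?_).trans (covFam_cons_le h q _)
  rw [span_range_intBasis]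
  refine Fin.cases ?_ (fun a => ?_) b
  · exact Submodule.mem_sup_right (Submodule.mem_span_singleton_self _)
  · exact Submodule.mem_sup_left (intToRat_intBasis_mem W a)

variable {h}

theorem IsMarked.le_norm_mulVec {ρ τ : ℝ} (hdet : 1 ≤ |h.det|) (hρ : 0 < ρ) (hρ1 : ρ ≤ 1)
    (hτ1 : τ ≤ 1)
    (hmarked : IsMarked (subspaceCov h) (fun W => ρ ^ Module.finrank ℚ W) τ (Set.Ioo ⊥ ⊤))
    {q : Fin m → ℤ} (hq : q ≠ 0) : τ * ρ ≤ m * ‖h *ᵥ fun i => (q i : ℝ)‖ := by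
  obtain ⟨F, -, hchain, hF, hext⟩ := hmarked
  have hq0 : intToRat m q ≠ 0 := (map_ne_zero_iff _ (intToRat_injective m)).2 hq
  obtain ⟨W, hW, hqW, hcomp⟩ :=
    exists_notMem_sup_span_comparable_of_isChain (R := ℚ) hchain hq0
  set W' := W ⊔ ℚ ∙ intToRat m q
  have hrank : Module.finrank ℚ W' = Module.finrank ℚ W + 1 :=
    Submodule.finrank_sup_span_singleton hqW
  have hrank_le : (Module.finrank ℚ W + 1 : ℝ) ≤ m := by
    have := Submodule.finrank_le W'
    rw [hrank, Module.finrank_fin_fun] at this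
    exact_mod_cast this
  have hupp : subspaceCov h W ≤ ρ ^ Module.finrank ℚ W := by
    obtain rfl | hWF := hW
    · simp [subspaceCov_bot]
    · exact hF W hWF
  have hlow : τ * ρ ^ Module.finrank ℚ W' ≤ subspaceCov h W' := by
    by_cases htop : W' = ⊤
    · calc τ * ρ ^ Module.finrank ℚ W' ≤ 1 :=
            (mul_le_of_le_one_left (by positivity) hτ1).trans (pow_le_one₀ hρ.le hρ1)
        _ ≤ |h.det| := hdet
        _ ≤ subspaceCov h W' := htop ▸ abs_det_le_subspaceCov_top h
    · refine hext W' ⟨bot_lt_iff_ne_bot.2 fun hbot => ?_, lt_top_iff_ne_top.2 htop⟩ hcomp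
      rw [hbot, finrank_bot] at hrank
      exact Nat.succ_ne_zero _ hrank.symm
  refine le_of_mul_le_mul_right ?_ (pow_pos hρ (Module.finrank ℚ W))
  calc τ * ρ * ρ ^ Module.finrank ℚ W = τ * ρ ^ Module.finrank ℚ W' := by rw [hrank]; ring
    _ ≤ subspaceCov h W' := hlow
    _ ≤ (Module.finrank ℚ W + 1) * ‖h *ᵥ fun i => (q i : ℝ)‖ * subspaceCov h W :=
        subspaceCov_sup_span_le h hqW
    _ ≤ m * ‖h *ᵥ fun i => (q i : ℝ)‖ * ρ ^ Module.finrank ℚ W := by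
        have := subspaceCov_nonneg h W
        gcongr

end Covolume

section Divergence

/-- The lattices `h i ℤ^m` contain arbitrarily short nonzero vectors for large `i`. For `h i` of
determinant one, Mahler's criterion says that these lattices diverge in the space of lattices. -/
def IsDivergent {m : ℕ} (h : ℕ → Matrix (Fin m) (Fin m) ℝ) : Prop :=
  ∀ ε > 0, ∀ᶠ i in atTop, ∃ q : Fin m → ℤ, q ≠ 0 ∧ ‖h i *ᵥ fun a => (q a : ℝ)‖ < ε

theorem IsDivergent.eventually_not_isMarked {m : ℕ} {h : ℕ → Matrix (Fin m) (Fin m) ℝ}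
    (hh : IsDivergent h) (hdet : ∀ i, 1 ≤ |(h i).det|) {ρ τ : ℝ} (hρ : 0 < ρ) (hρ1 : ρ ≤ 1)
    (hτ : 0 < τ) (hτ1 : τ ≤ 1) :
    ∀ᶠ i in atTop,
      ¬ IsMarked (subspaceCov (h i)) (fun W => ρ ^ Module.finrank ℚ W) τ (Set.Ioo ⊥ ⊤) := by
  filter_upwards [hh (τ * ρ / (m + 1)) (by positivity)] with i ⟨q, hq, hlt⟩ hmarked
  rw [lt_div_iff₀ (by positivity)] at hlt
  linarith [hmarked.le_norm_mulVec (hdet i) hρ hρ1 hτ1 hq,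
    norm_nonneg (h i *ᵥ fun a => (q a : ℝ))]

variable {X : Type*} [MetricSpace X] [MeasurableSpace X] {μ : Measure X} {D : ℝ≥0} {C α c : ℝ}
  {U : Set X} {x₀ : X} {s : ℝ} {n : ℕ}

theorem nondivConst_mul_measure_ball_ne_top [IsLocallyFiniteMeasure μ] (hμ : IsFedererOn μ D U)
    (hU : Metric.ball x₀ (3 ^ (n + 1) * s) ⊆ U)
    (hne : (Metric.ball x₀ s ∩ measSupport μ).Nonempty) (N : ℕ) (C : ℝ≥0) :
    (nondivConst N D C n : ℝ≥0∞) * μ (Metric.ball x₀ (3 * s)) ≠ ∞ := by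
  obtain - | n := n
  · simp [nondivConst]
  obtain ⟨y, hy, hyμ⟩ := hne
  have hs : 0 < s := Metric.pos_of_mem_ball hy
  have hfin : μ (Metric.ball y (3 * (2 * s))) < ∞ := by
    refine hμ.measure_ball_lt_top hyμ (subset_trans ?_ hU)
    calc Metric.ball y (3 * (2 * s)) ⊆ Metric.ball y (3 ^ n * (3 * (2 * s))) :=
          ball_subset_ball_pow_mul y (by positivity) n
      _ = Metric.ball y (3 ^ (n + 1) * (2 * s)) := by rw [pow_succ, mul_assoc]
      _ ⊆ Metric.ball x₀ (3 ^ (n + 1 + 1) * s) := ball_pow_mul_subset_ball_pow_mul hy le_rfl _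
  refine ENNReal.mul_ne_top ENNReal.coe_ne_top ((measure_mono ?_).trans_lt hfin).ne
  exact Metric.ball_subset_ball' (by linarith [Metric.mem_ball'.1 hy])

variable [OpensMeasurableSpace X]

theorem measure_not_isMarked_subspaceCov_le {N : ℕ} (hN : IsBesicovitchWith X N)
    (hμ : IsFedererOn μ D U) (hU : Metric.ball x₀ (3 ^ (n + 1) * s) ⊆ U) (hα : 0 ≤ α)
    {h : X → Matrix (Fin (n + 1)) (Fin (n + 1)) ℝ} (hcont : ContinuousOn h U)
    (hgood : ∀ W ∈ Set.Ioo (⊥ : Submodule ℚ (Fin (n + 1) → ℚ)) ⊤,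
      IsCAGoodOn μ C α (fun x => subspaceCov (h x) W) U)
    (hne : (Metric.ball x₀ s ∩ measSupport μ).Nonempty)
    (hsup : ∀ W ∈ Set.Ioo (⊥ : Submodule ℚ (Fin (n + 1) → ℚ)) ⊤, c ^ Module.finrank ℚ W ≤
      sSup ((fun x => subspaceCov (h x) W) '' (Metric.ball x₀ s ∩ measSupport μ)))
    {ρ τ : ℝ} (hρ : 0 < ρ) (hρc : ρ < c) (hτ : 0 < τ) (hτ1 : τ ≤ 1) :
    μ {x ∈ Metric.ball x₀ s ∩ measSupport μ |
        ¬ IsMarked (subspaceCov (h x)) (fun W => ρ ^ Module.finrank ℚ W) τ (Set.Ioo ⊥ ⊤)} ≤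
      nondivConst N D C.toNNReal n * ENNReal.ofReal (τ ^ α) * μ (Metric.ball x₀ (3 * s)) := by
  have hheight : (Set.Ioo (⊥ : Submodule ℚ (Fin (n + 1) → ℚ)) ⊤).chainHeight (· ≤ ·) ≤ n := by
    simpa using chainHeight_Ioo_bot_top_le (K := ℚ) (V := Fin (n + 1) → ℚ)
  refine measure_not_isMarked_le (ψ := fun W x => subspaceCov (h x) W) hN hμ hα
    (fun W => by positivity) (fun W x => subspaceCov_nonneg _ W) hτ hτ1 hheight hgood
    (fun W _ => (continuous_covFam (intBasis W)).comp_continuousOn hcont) hU fun W hW => ?_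
  have hlt : ρ ^ Module.finrank ℚ W < c ^ Module.finrank ℚ W :=
    pow_lt_pow_left₀ hρc hρ.le (Submodule.finrank_eq_zero.not.2 hW.1.ne')
  obtain ⟨_, ⟨x, hx, rfl⟩, hxlt⟩ :=
    exists_lt_of_lt_csSup (hne.image _) (hlt.trans_le (hsup W hW))
  exact ⟨x, hx, hxlt.le⟩

theorem measure_setOf_isDivergent_eq_zero [IsLocallyFiniteMeasure μ] (hX : IsBesicovitchSpace X)
    (hμ : IsFedererOn μ D U) (hU : Metric.ball x₀ (3 ^ (n + 1) * s) ⊆ U) (hα : 0 < α)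
    {h : ℕ → X → Matrix (Fin (n + 1)) (Fin (n + 1)) ℝ} (hcont : ∀ i, ContinuousOn (h i) U)
    (hdet : ∀ i x, 1 ≤ |(h i x).det|)
    (hgood : ∀ i, ∀ W ∈ Set.Ioo (⊥ : Submodule ℚ (Fin (n + 1) → ℚ)) ⊤,
      IsCAGoodOn μ C α (fun x => subspaceCov (h i x) W) U)
    (hc : 0 < c)
    (hsup : ∀ i, ∀ W ∈ Set.Ioo (⊥ : Submodule ℚ (Fin (n + 1) → ℚ)) ⊤, c ^ Module.finrank ℚ W ≤
      sSup ((fun x => subspaceCov (h i x) W) '' (Metric.ball x₀ s ∩ measSupport μ))) :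
    μ {x ∈ Metric.ball x₀ s | IsDivergent (h · x)} = 0 := by
  suffices hsupp : μ {x ∈ Metric.ball x₀ s ∩ measSupport μ | IsDivergent (h · x)} = 0 by
    refine measure_mono_null (fun x hx => ?_)
      (measure_union_null hX.measure_compl_measSupport hsupp)
    exact or_iff_not_imp_left.2 fun hxμ => ⟨⟨hx.1, not_not.1 hxμ⟩, hx.2⟩
  rcases (Metric.ball x₀ s ∩ measSupport μ).eq_empty_or_nonempty with hempty | hne
  · simp [hempty]
  obtain ⟨N, hN⟩ := hX
  obtain ⟨ρ, hρ, hρc⟩ := exists_between (lt_min hc one_pos)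
  rw [lt_min_iff] at hρc
  refine eq_zero_of_forall_le_mul_rpow
    (nondivConst_mul_measure_ball_ne_top hμ hU hne N C.toNNReal) hα fun τ hτ hτ1 => ?_
  rw [mul_right_comm]
  refine (measure_mono ?_).trans (measure_setOf_eventually_mem_le_s6 fun i =>
    measure_not_isMarked_subspaceCov_le hN hμ hU hα.le (hcont i) (hgood i) hne (hsup i) hρ hρc.1
      hτ hτ1)
  rintro x ⟨hx, hdiv⟩
  filter_upwards [hdiv.eventually_not_isMarked (hdet · x) hρ hρc.2.le hτ hτ1] with i hi
  exact ⟨hx, hi⟩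

end Divergence

section Flow

theorem gMat_eq_diagonal (n k : ℕ) : gMat n k =
    Matrix.diagonal (Fin.cons (Real.exp (n * k)) fun _ => Real.exp (-k)) := by
  ext i j
  cases i using Fin.cases <;> simp [gMat, Matrix.diagonal_apply]

theorem det_gMat (n k : ℕ) : (gMat n k).det = 1 := by
  rw [gMat_eq_diagonal, Matrix.det_diagonal, Fin.prod_univ_succ]
  simp [← Real.exp_nat_mul, ← Real.exp_add]

theorem gMat_mulVec_cons (n k : ℕ) (a : ℝ) (y : Fin n → ℝ) :
    gMat n k *ᵥ Fin.cons a y = Fin.cons (Real.exp (n * k) * a) (Real.exp (-k) • y) := by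
  ext i
  rw [gMat_eq_diagonal, Matrix.mulVec_diagonal]
  cases i using Fin.cases <;> rfl

theorem det_uMat {n : ℕ} (x : Fin n → ℝ) : (uMat x).det = 1 := by
  rw [Matrix.det_of_isUpperTriangular]
  · simp [uMat]
  · intro i j (hij : j < i)
    simp [uMat, hij.ne', ((Fin.zero_le j).trans_lt hij).ne']

theorem uMat_mulVec_cons {n : ℕ} (x : Fin n → ℝ) (a : ℝ) (y : Fin n → ℝ) :
    uMat x *ᵥ Fin.cons a y = Fin.cons (y ⬝ᵥ x + a) y := by
  ext i
  cases i using Fin.cases with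
  | zero =>
    simp [Matrix.mulVec, dotProduct, uMat, Fin.sum_univ_succ, mul_comm, add_comm,
        (Fin.succ_ne_zero _).symm]
  | succ l => simp [Matrix.mulVec, dotProduct, uMat]

theorem continuous_uMat (n : ℕ) : Continuous (uMat : (Fin n → ℝ) → _) := by
  refine continuous_matrix fun i j => ?_
  unfold uMat
  split_ifs
  · exact continuous_const
  · cases j using Fin.cases with
    | zero => exact continuous_const
    | succ l => exact continuous_apply l
  · exact continuous_const

theorem IsSingularVec.isDivergent {n : ℕ} {x : Fin n → ℝ} (hx : IsSingularVec x) {k : ℕ → ℕ}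
    (hk : Tendsto k atTop atTop) : IsDivergent fun i => gMat n (k i) * uMat x := by
  intro ε hε
  obtain ⟨Q₀, -, hQ⟩ := hx (ε * (ε / 2) ^ n) (by positivity)
  have hlim : Tendsto (fun i => ε / 2 * Real.exp (k i)) atTop atTop :=
    (Real.tendsto_exp_atTop.comp (tendsto_natCast_atTop_atTop.comp hk)).const_mul_atTop
      (by positivity)
  filter_upwards [hlim.eventually_ge_atTop Q₀] with i hi
  obtain ⟨q, hq, q₀, hlt, hle⟩ := hQ _ hi
  refine ⟨Fin.cons q₀ q, fun h => hq (funext fun l => congrFun h l.succ), ?_⟩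
  have hcast : (fun a => ((Fin.cons q₀ q : Fin (n + 1) → ℤ) a : ℝ)) =
      Fin.cons (q₀ : ℝ) fun l => (q l : ℝ) := by
    ext a
    cases a using Fin.cases <;> rfl
  rw [hcast, ← Matrix.mulVec_mulVec, uMat_mulVec_cons, gMat_mulVec_cons,
    pi_norm_lt_iff hε, Fin.forall_fin_succ]
  simp only [Fin.cons_zero, Fin.cons_succ, norm_mul, Real.norm_eq_abs, Real.abs_exp, Pi.smul_apply,
    smul_eq_mul]
  constructor
  · have hbound : ε * (ε / 2) ^ n / (ε / 2 * Real.exp (k i)) ^ n = ε / Real.exp (n * k i) := by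
      rw [mul_pow, ← Real.exp_nat_mul]
      field
    rwa [hbound, lt_div_iff₀ (Real.exp_pos _), mul_comm] at hlt
  · intro l
    calc Real.exp (-k i) * |(q l : ℝ)| ≤ Real.exp (-k i) * (ε / 2 * Real.exp (k i)) := by
          gcongr
          exact hle l
      _ = ε / 2 := by
          rw [Real.exp_neg]
          field
      _ < ε := half_lt_self hε

end Flow

theorem stmt_6_general {X : Type*} [MetricSpace X] [MeasurableSpace X] [OpensMeasurableSpace X]
    (hX : IsBesicovitchSpace X) {n : ℕ} {x₀ : X} {r₀ : ℝ} {μ : Measure X}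
    [IsLocallyFiniteMeasure μ] {D : ℝ≥0}
    (hFed : IsFedererOn μ D (Metric.ball x₀ (3 ^ (n + 1) * r₀)))
    {f : X → Fin n → ℝ} (hf : ContinuousOn f (Metric.ball x₀ (3 ^ (n + 1) * r₀)))
    {C α : ℝ} (hα : 0 < α) {k : ℕ → ℕ}
    (hgood : ∀ i r : ℕ, 1 ≤ r → ∀ v : Fin r → Fin (n + 1) → ℤ, IsPrimitiveBasis v →
      IsCAGoodOn μ C α (fun x => covFam (gMat n (k i) * uMat (f x)) v)
        (Metric.ball x₀ (3 ^ (n + 1) * r₀)))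
    {c : ℝ} (hc : 0 < c) (hk : Tendsto k atTop atTop)
    (hsup : ∀ i r : ℕ, 1 ≤ r → ∀ v : Fin r → Fin (n + 1) → ℤ, IsPrimitiveBasis v →
      c ^ r ≤ sSup ((fun x => covFam (gMat n (k i) * uMat (f x)) v) ''
        (Metric.ball x₀ r₀ ∩ measSupport μ))) :
    μ {x ∈ Metric.ball x₀ r₀ | IsSingularVec (f x)} = 0 := by
  have hdet : ∀ i x, 1 ≤ |(gMat n (k i) * uMat (f x)).det| := by simp [det_gMat, det_uMat]
  have hcont : ∀ i, ContinuousOn (fun x => gMat n (k i) * uMat (f x))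
      (Metric.ball x₀ (3 ^ (n + 1) * r₀)) := fun i =>
    (continuous_const.matrix_mul (continuous_uMat n)).comp_continuousOn hf
  have hrank : ∀ W ∈ Set.Ioo (⊥ : Submodule ℚ (Fin (n + 1) → ℚ)) ⊤,
      1 ≤ Module.finrank ℤ (latticePoints W) := fun W hW => by
    rw [finrank_latticePoints, Submodule.one_le_finrank_iff]
    exact hW.1.ne'
  have hdivergent : μ {x ∈ Metric.ball x₀ r₀ |
      IsDivergent fun i => gMat n (k i) * uMat (f x)} = 0 :=
    measure_setOf_isDivergent_eq_zero hX hFed subset_rfl hα hcont hdet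
      (fun i W hW => hgood i _ (hrank W hW) _ isPrimitiveBasis_intBasis) hc fun i W hW =>
        finrank_latticePoints W ▸ hsup i _ (hrank W hW) _ isPrimitiveBasis_intBasis
  refine measure_mono_null ?_ hdivergent
  exact fun x ⟨hx, hsing⟩ => ⟨hx, hsing.isDivergent hk⟩

/-- Quantitative nondivergence criterion for singularity: under conditions (1) and (2),
the set of `x ∈ B` with `f(x)` singular has `μ`-measure zero. -/
theorem stmt_6 {X : Type*} [MetricSpace X] [MeasurableSpace X] [BorelSpace X]
    (hX : IsBesicovitchSpace X) (n : ℕ) (hn : 1 ≤ n)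
    (x₀ : X) (r₀ : ℝ) (hr₀ : 0 < r₀) (μ : Measure X) [μ.Regular]
    (D : ℝ) (hD : 0 < D)
    -- μ is D-Federer on B̃ = B(x₀, 3^{n+1} r₀)
    (hFed : ∀ y ∈ measSupport μ, ∀ ρ : ℝ, 0 < ρ →
      Metric.ball y (3 * ρ) ⊆ Metric.ball x₀ ((3 : ℝ) ^ (n+1) * r₀) →
      μ (Metric.ball y (3 * ρ)) ≤ ENNReal.ofReal D * μ (Metric.ball y ρ))
    (f : X → Fin n → ℝ) (hf : ContinuousOn f (Metric.ball x₀ ((3 : ℝ) ^ (n+1) * r₀)))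
    -- (1): all the functions x ↦ cov(g_k u_{f(x)} Γ) are (C,α)-good on B̃ w.r.t. μ
    (C α : ℝ) (hC : 0 < C) (hα : 0 < α)
    (h1 : ∀ k : ℕ, ∀ rk : ℕ, 1 ≤ rk → ∀ v : Fin rk → Fin (n+1) → ℤ, IsPrimitiveBasis v →
      IsCAGoodOn μ C α (fun x => covFam (gMat n k * uMat (f x)) v)
        (Metric.ball x₀ ((3 : ℝ) ^ (n+1) * r₀)))
    -- (2): sup over B ∩ supp μ of cov(g_{k_i} u_{f(x)} Γ) is at least c^{rank Γ}
    (c : ℝ) (hc : 0 < c) (k : ℕ → ℕ) (hk : Tendsto k atTop atTop)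
    (h2 : ∀ i : ℕ, ∀ rk : ℕ, 1 ≤ rk → ∀ v : Fin rk → Fin (n+1) → ℤ, IsPrimitiveBasis v →
      c ^ rk ≤ sSup ((fun x => covFam (gMat n (k i) * uMat (f x)) v) ''
        (Metric.ball x₀ r₀ ∩ measSupport μ))) :
    μ {x ∈ Metric.ball x₀ r₀ | IsSingularVec (f x)} = 0 :=
  have : IsLocallyFiniteMeasure μ := isLocallyFiniteMeasure_of_regular
  stmt_6_general hX (D := D.toNNReal) hFed hf hα (fun i => h1 (k i)) hc hk h2
end
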